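/- arXiv:1703.07964 — 2 statements merged into one kernel-verified Lean document; each statement's English description precedes it below -/
import Mathlib

section
/- Let G1 be a simple bidirected graph with nonnegative edge weights and let v be a node of G1 with exactly d neighbors u1,…,ud, where d ≥ 4. Let G2 be the graph obtained from G1 by the operation Split(v). Then G2 is a simple bidirected graph, G1 has a non-degenerate cycle if and only if G2 does, and in that case the minimum weight of a non-degenerate cycle of G1 equals the minimum weight of a non-degenerate cycle of G2. -/
open scoped ENNReal

/-- A simple directed graph on node type `V`, with nonnegative (extended-real)
edge weights: there are no self-loops, and between any ordered pair of nodes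
there is at most one edge (so no parallel edges). -/
structure WDigraph (V : Type) where
  Edge : V → V → Prop
  w : V → V → ℝ≥0∞
  irrefl : ∀ v, ¬ Edge v v

namespace WDigraph

variable {V : Type}

/-- The consecutive steps (directed edges) of a walk given as its list of nodes. -/
def steps (l : List V) : List (V × V) := l.zip l.tail

/-- `l` is a walk of `G` (nodes may repeat). -/
def IsWalk (G : WDigraph V) (l : List V) : Prop := l ≠ [] ∧ l.Chain' G.Edge

/-- `l` is an `s`-`t`-path of `G` (nodes may repeat). -/
def IsPath (G : WDigraph V) (s t : V) (l : List V) : Prop :=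
  G.IsWalk l ∧ l.head? = some s ∧ l.getLast? = some t

/-- The weight of a walk: the sum of the weights of its edges. -/
noncomputable def wWalk (G : WDigraph V) (l : List V) : ℝ≥0∞ :=
  ((steps l).map fun e => G.w e.1 e.2).sum

/-- A cycle of `G` is an `s`-`s`-path for some node `s`. -/
def IsCycle (G : WDigraph V) (l : List V) : Prop := ∃ s, G.IsPath s s l

/-- The walk `l` traverses the directed edge `(s,t)`. -/
def Traverses (l : List V) (s t : V) : Prop := (s, t) ∈ steps l

/-- A cycle is degenerate if it is a single node or traverses both `st` and `ts`. -/
def Degenerate (l : List V) : Prop :=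
  l.length = 1 ∨ ∃ s t, Traverses l s t ∧ Traverses l t s

/-- A simple cycle passes each node at most once. -/
def IsSimpleCycle (G : WDigraph V) (l : List V) : Prop :=
  G.IsCycle l ∧ l.dropLast.Nodup

/-- `G` is bidirected: `st` is an edge iff `ts` is an edge. -/
def Bidirected (G : WDigraph V) : Prop := ∀ u v, G.Edge u v → G.Edge v u

/-- `d_G(u,v)`: the minimum weight of a `u`-`v`-path, `∞` if there is none. -/
noncomputable def dist (G : WDigraph V) (s t : V) : ℝ≥0∞ :=
  sInf {x | ∃ l, G.IsPath s t l ∧ G.wWalk l = x}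

end WDigraph

/-- A plane embedding of the (bidirected) graph with adjacency `A` on node
type `V`: nodes are drawn as distinct points, each bundled pair of oppositely
directed edges is drawn as a single simple arc joining its endpoints, and two
arcs meet only at common endpoints and avoid all other nodes. -/
structure PlaneEmbedding {V : Type} (A : V → V → Prop) where
  pos : V → ℝ × ℝ
  arc : V → V → ℝ → ℝ × ℝ
  pos_inj : Function.Injective pos
  arc_cont : ∀ u v, A u v → ContinuousOn (arc u v) (Set.Icc 0 1)
  arc_start : ∀ u v, A u v → arc u v 0 = pos u
  arc_end : ∀ u v, A u v → arc u v 1 = pos v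
  arc_inj : ∀ u v, A u v → Set.InjOn (arc u v) (Set.Icc 0 1)
  arc_symm : ∀ u v, A u v → ∀ t, arc v u t = arc u v (1 - t)
  arc_avoid : ∀ u v, A u v → ∀ x : V, pos x ∈ arc u v '' Set.Icc 0 1 → x = u ∨ x = v
  arc_meet : ∀ u v x y, A u v → A x y → ({u, v} : Set V) ≠ {x, y} →
    arc u v '' Set.Icc 0 1 ∩ arc x y '' Set.Icc 0 1 ⊆ ({pos u, pos v} : Set (ℝ × ℝ)) ∩ {pos x, pos y}

/-- The drawing (point set in the plane) of a set of directed edges. -/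
def PlaneEmbedding.drawing {V : Type} {A : V → V → Prop} (emb : PlaneEmbedding A)
    (E : Set (V × V)) : Set (ℝ × ℝ) :=
  ⋃ e ∈ E, emb.arc e.1 e.2 '' Set.Icc 0 1

/-- The drawing of the whole graph. -/
def PlaneEmbedding.fullDrawing {V : Type} {A : V → V → Prop} (emb : PlaneEmbedding A) :
    Set (ℝ × ℝ) :=
  emb.drawing {e | A e.1 e.2}

/-- A face of the embedded graph: a connected component of the complement of
the drawing. -/
def PlaneEmbedding.IsFace {V : Type} {A : V → V → Prop} (emb : PlaneEmbedding A)
    (F : Set (ℝ × ℝ)) : Prop :=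
  ∃ x, x ∉ emb.fullDrawing ∧ F = connectedComponentIn (emb.fullDrawing)ᶜ x

/-!
Splitting `v` replaces it by a zero-weight tree, and contracting this tree recovers `G1`; so
consider any contraction of a zero-weight forest. Contracting a non-degenerate cycle preserves its
weight and creates no antiparallel pair of edges, and it does not collapse the cycle to a point,
since a closed walk in a forest must turn around somewhere. Conversely, a non-degenerate cycle
contains a simple one, which lifts by inserting, at every node it visits, the path inside the
corresponding tree; it is essential that each tree is visited only once, as two visits might
traverse an edge of the tree in opposite directions.
-/

namespace WDigraph

section Steps

variable {V W : Type} {l : List V}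

theorem steps_cons_cons (x y : V) (l : List V) : steps (x :: y :: l) = (x, y) :: steps (y :: l) :=
  rfl

theorem steps_map (f : V → W) (l : List V) : steps (l.map f) = (steps l).map (Prod.map f f) := by
  rw [steps, ← List.map_tail, List.zip_map, steps]

theorem mem_of_mem_steps {e : V × V} (he : e ∈ steps l) : e.1 ∈ l ∧ e.2 ∈ l :=
  ⟨(List.of_mem_zip he).1, List.mem_of_mem_tail (List.of_mem_zip he).2⟩

theorem steps_append_cons (l r : List V) (x : V) :
    steps (l ++ x :: r) = steps (l ++ [x]) ++ steps (x :: r) := by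
  induction l with
  | nil => rfl
  | cons y l ih => cases l with
    | nil => rfl
    | cons z l => simpa [steps_cons_cons] using ih

theorem steps_append_of_getLast? {r : List V} {x y : V} (hl : l.getLast? = some x)
    (hr : r.head? = some y) : steps (l ++ r) = steps l ++ (x, y) :: steps r := by
  obtain ⟨l, rfl⟩ := List.getLast?_eq_some_iff.1 hl
  obtain ⟨r, rfl⟩ := List.head?_eq_some_iff.1 hr
  rw [List.append_assoc, List.singleton_append, steps_append_cons, steps_cons_cons]

theorem steps_isInfix {l₁ l₂ : List V} (h : l₁ <:+: l₂) : steps l₁ <:+: steps l₂ := by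
  obtain ⟨a, b, rfl⟩ := h
  have hpre : steps l₁ <+: steps (l₁ ++ b) := by
    rcases l₁.eq_nil_or_concat with rfl | ⟨c, y, rfl⟩
    · exact List.nil_prefix
    · rw [List.concat_eq_append, List.append_assoc, List.singleton_append, steps_append_cons c b]
      exact List.prefix_append _ _
  have hsuf : ∀ l, steps l <:+ steps (a ++ l)
    | [] => List.nil_suffix
    | x :: l => by
      rw [steps_append_cons]
      exact List.suffix_append _ _
  rw [List.append_assoc]
  exact hpre.isInfix.trans (hsuf _).isInfix

theorem isChain_iff_forall_mem_steps {R : V → V → Prop} :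
    l.IsChain R ↔ ∀ e ∈ steps l, R e.1 e.2 := by
  induction l with
  | nil => simp [steps]
  | cons x l ih => cases l with
    | nil => simp [steps]
    | cons y l => rw [List.isChain_cons_cons, ih, steps_cons_cons, List.forall_mem_cons]

open Classical in
theorem exists_steps_eq_filter_ne (x : V) (l : List V) :
    ∃ m, (x :: m).getLast? = (x :: l).getLast? ∧
      steps (x :: m) = (steps (x :: l)).filter fun e => e.1 ≠ e.2 := by
  induction l generalizing x with
  | nil => exact ⟨[], rfl, rfl⟩
  | cons y l ih =>
    obtain ⟨m, hlast, hsteps⟩ := ih y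
    by_cases hxy : x = y
    · subst hxy
      exact ⟨m, by simpa using hlast, by simpa [steps_cons_cons] using hsteps⟩
    · exact ⟨y :: m, by simpa using hlast, by simpa [steps_cons_cons, hxy] using hsteps⟩

theorem exists_eq_append_of_not_nodup (h : ¬ l.Nodup) :
    ∃ x a b c, l = a ++ x :: (b ++ x :: c) := by
  induction l with
  | nil => exact absurd List.nodup_nil h
  | cons y l ih =>
    by_cases hy : y ∈ l
    · obtain ⟨b, c, rfl⟩ := List.append_of_mem hy
      exact ⟨y, [], b, c, rfl⟩
    · obtain ⟨x, a, b, c, rfl⟩ := ih fun hl => h (List.nodup_cons.2 ⟨hy, hl⟩)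
      exact ⟨x, y :: a, b, c, rfl⟩

end Steps

section NondegenerateCycle

variable {V W : Type} {l : List V} {G : WDigraph V}

/-- The walk `l` never traverses both an edge and its reverse. -/
def AntiparallelFree (l : List V) : Prop := ∀ e ∈ steps l, e.swap ∉ steps l

theorem AntiparallelFree.of_isInfix {l₁ l₂ : List V} (h : AntiparallelFree l₂) (hl : l₁ <:+: l₂) :
    AntiparallelFree l₁ := fun e he he' =>
  h e ((steps_isInfix hl).subset he) ((steps_isInfix hl).subset he')

theorem antiparallelFree_of_nodup (h : l.Nodup) : AntiparallelFree l := by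
  induction l with
  | nil => simp [AntiparallelFree, steps]
  | cons x l ih => cases l with
    | nil => simp [AntiparallelFree, steps]
    | cons y l =>
      have hx : ∀ e ∈ steps (y :: l), e.1 ≠ x ∧ e.2 ≠ x := fun e he =>
        ⟨fun h' => (List.nodup_cons.1 h).1 (h' ▸ (mem_of_mem_steps he).1),
          fun h' => (List.nodup_cons.1 h).1 (h' ▸ (mem_of_mem_steps he).2)⟩
      have hfree := ih h.of_cons
      grind [AntiparallelFree, steps_cons_cons]

/-- A non-degenerate cycle of `G`, described through its list of steps; see
`isNondegenerateCycle_iff` for the definition as a cycle that is not degenerate. -/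
structure IsNondegenerateCycle (G : WDigraph V) (l : List V) : Prop where
  head?_eq_getLast? : l.head? = l.getLast?
  steps_ne_nil : steps l ≠ []
  edge : ∀ e ∈ steps l, G.Edge e.1 e.2
  antiparallelFree : AntiparallelFree l

theorem isNondegenerateCycle_iff : G.IsNondegenerateCycle l ↔ G.IsCycle l ∧ ¬ Degenerate l := by
  have hchain : l.IsChain G.Edge ↔ _ := isChain_iff_forall_mem_steps
  cases l with
  | nil => exact ⟨fun h => absurd rfl h.steps_ne_nil, fun ⟨⟨_, h, _⟩, _⟩ => absurd rfl h.1⟩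
  | cons x l =>
    constructor
    · rintro ⟨hclosed, hne, hedge, hfree⟩
      refine ⟨⟨x, ⟨List.cons_ne_nil x l, hchain.2 hedge⟩, rfl, hclosed.symm⟩, ?_⟩
      rintro (hlen | ⟨s, t, hst, hts⟩)
      · obtain ⟨y, hy⟩ := List.length_eq_one_iff.1 hlen
        exact hne (hy ▸ rfl)
      · exact hfree _ hst hts
    · rintro ⟨⟨s, ⟨-, hedge⟩, hhead, hlast⟩, hdeg⟩
      refine ⟨hhead.trans hlast.symm, fun hne => hdeg (Or.inl ?_), hchain.1 hedge,
        fun e he he' => hdeg (Or.inr ⟨e.1, e.2, he, he'⟩)⟩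
      cases l with
      | nil => rfl
      | cons y l => exact absurd hne (List.cons_ne_nil _ _)

theorem IsNondegenerateCycle.exists_eq_cons_append_singleton (h : G.IsNondegenerateCycle l) :
    ∃ x m, l = x :: m ++ [x] := by
  match l, h with
  | [], h => exact absurd rfl h.steps_ne_nil
  | [_], h => exact absurd rfl h.steps_ne_nil
  | x :: y :: l, h =>
    have hx : (y :: l).getLast? = some x := by simpa using h.head?_eq_getLast?.symm
    obtain ⟨m, hm⟩ := List.getLast?_eq_some_iff.1 hx
    exact ⟨x, m, by rw [hm, List.cons_append]⟩

theorem wWalk_le_of_isInfix {l₁ l₂ : List V} (h : l₁ <:+: l₂) : G.wWalk l₁ ≤ G.wWalk l₂ :=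
  ((steps_isInfix h).sublist.map _).sum_le_sum fun _ _ => zero_le

theorem IsNondegenerateCycle.exists_isInfix_nodup (h : G.IsNondegenerateCycle l) :
    ∃ c, c <:+: l ∧ G.IsNondegenerateCycle c ∧ c.dropLast.Nodup := by
  induction hn : l.length using Nat.strong_induction_on generalizing l with
  | _ n ih =>
    by_cases hnd : l.dropLast.Nodup
    · exact ⟨l, List.infix_refl l, h, hnd⟩
    obtain ⟨x, a, b, c, hl⟩ := exists_eq_append_of_not_nodup hnd
    have hsub : x :: b ++ [x] <:+: l.dropLast := ⟨a, c, by simp [hl]⟩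
    have hsub' := hsub.trans l.dropLast_prefix.isInfix
    have hlt : (x :: b ++ [x]).length < n := by
      have hle := hsub.length_le
      simp only [List.length_dropLast, List.length_append, List.length_cons] at hle ⊢
      lia
    obtain ⟨c, hc, hcycle⟩ := ih _ hlt (l := x :: b ++ [x])
      { head?_eq_getLast? := List.getLast?_concat.symm
        steps_ne_nil := by cases b <;> simp [steps]
        edge := fun e he => h.edge e ((steps_isInfix hsub').subset he)
        antiparallelFree := h.antiparallelFree.of_isInfix hsub' } rfl
    exact ⟨c, hc.trans hsub', hcycle⟩

theorem AntiparallelFree.isPath_of_isAcyclic {F : SimpleGraph V} (hF : F.IsAcyclic) {a b : V}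
    {p : F.Walk a b} (hp : AntiparallelFree p.support) : p.IsPath := by
  rw [hF.isPath_iff_isChain]
  induction p with
  | nil => exact List.isChain_nil
  | cons hab p ih => cases p with
    | nil => exact List.isChain_singleton _
    | cons hbc p =>
      have hchain := ih (hp.of_isInfix (List.suffix_cons _ _).isInfix)
      refine List.isChain_cons_cons.2 ⟨fun heq => ?_, hchain⟩
      rcases Sym2.eq_iff.1 heq with ⟨hab', -⟩ | ⟨hac, -⟩
      · exact hab.ne hab'
      · refine hp (_, _) List.mem_cons_self (List.mem_cons_of_mem _ ?_)
        rw [SimpleGraph.Walk.support_cons, ← p.cons_tail_support]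
        exact List.mem_cons.2 (Or.inl (Prod.ext rfl hac))

theorem AntiparallelFree.nodup_of_isAcyclic (h : AntiparallelFree l) {F : SimpleGraph V}
    (hF : F.IsAcyclic) (hl : l.IsChain F.Adj) : l.Nodup := by
  rcases eq_or_ne l [] with rfl | hne
  · exact List.nodup_nil
  have hsupport := SimpleGraph.Walk.support_ofSupport hne hl
  rw [← hsupport] at h ⊢
  exact (h.isPath_of_isAcyclic hF).support_nodup

theorem IsNondegenerateCycle.exists_not_adj_of_isAcyclic (h : G.IsNondegenerateCycle l)
    {F : SimpleGraph V} (hF : F.IsAcyclic) : ∃ e ∈ steps l, ¬ F.Adj e.1 e.2 := by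
  by_contra! hadj
  have hnodup := h.antiparallelFree.nodup_of_isAcyclic hF (isChain_iff_forall_mem_steps.2 hadj)
  obtain ⟨x, m, rfl⟩ := h.exists_eq_cons_append_singleton
  simp at hnodup

/-- The infimum of the weights of the non-degenerate cycles of `G`, `∞` if there are none. -/
noncomputable def minCycleWeight (G : WDigraph V) : ℝ≥0∞ :=
  sInf {x | ∃ l, G.IsCycle l ∧ ¬ Degenerate l ∧ G.wWalk l = x}

theorem minCycleWeight_le_of_forall_exists {H : WDigraph W}
    (h : ∀ l, G.IsNondegenerateCycle l → ∃ m, H.IsNondegenerateCycle m ∧ H.wWalk m ≤ G.wWalk l) :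
    H.minCycleWeight ≤ G.minCycleWeight := by
  refine le_sInf ?_
  rintro _ ⟨l, hcycle, hdeg, rfl⟩
  obtain ⟨m, hm, hle⟩ := h l (isNondegenerateCycle_iff.2 ⟨hcycle, hdeg⟩)
  obtain ⟨hmc, hmd⟩ := isNondegenerateCycle_iff.1 hm
  calc H.minCycleWeight ≤ H.wWalk m := sInf_le ⟨m, hmc, hmd, rfl⟩
    _ ≤ G.wWalk l := hle

end NondegenerateCycle

/-- `G₁` arises from `G₂` by contracting the components of the zero-weight forest `F`: the fibers
of `π` are the trees of `F`, and the remaining edges of `G₂` are mapped onto those of `G₁` with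
their weights. By `eq_of_map_eq`, edges of `G₂` above oppositely directed edges of `G₁` are
themselves oppositely directed. -/
structure IsForestContraction {V W : Type} (G₂ : WDigraph W) (F : SimpleGraph W) (π : W → V)
    (G₁ : WDigraph V) : Prop where
  isAcyclic : F.IsAcyclic
  adj_iff : ∀ a b, F.Adj a b ↔ G₂.Edge a b ∧ π a = π b
  reachable : ∀ a b, π a = π b → F.Reachable a b
  w_eq_zero : ∀ a b, F.Adj a b → G₂.w a b = 0
  edge_map : ∀ a b, G₂.Edge a b → π a ≠ π b → G₁.Edge (π a) (π b)
  w_map : ∀ a b, G₂.Edge a b → π a ≠ π b → G₁.w (π a) (π b) = G₂.w a b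
  exists_edge : ∀ x y, G₁.Edge x y → ∃ a b, G₂.Edge a b ∧ π a = x ∧ π b = y
  eq_of_map_eq : ∀ a b c d, G₂.Edge a b → G₂.Edge c d → π a ≠ π b → π c = π b → π d = π a →
    c = b ∧ d = a

/-- The steps of the image of the walk `l` under `π` that remain when all steps inside fibers of
`π` are contracted. -/
noncomputable def crossings {V W : Type} (π : W → V) (l : List W) : List (V × V) :=
  open Classical in (steps (l.map π)).filter fun e => e.1 ≠ e.2

section Crossings

variable {V W : Type} {π : W → V} {l : List W}

theorem mem_crossings {x y : V} :
    (x, y) ∈ crossings π l ↔ x ≠ y ∧ ∃ a b, (a, b) ∈ steps l ∧ π a = x ∧ π b = y := by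
  simp [crossings, steps_map, and_comm]

theorem crossings_append {r : List W} {a b : W} (hl : l.getLast? = some a)
    (hr : r.head? = some b) (hab : π a ≠ π b) :
    crossings π (l ++ r) = crossings π l ++ (π a, π b) :: crossings π r := by
  simp only [crossings, steps_map, steps_append_of_getLast? hl hr]
  simp [hab]

end Crossings

/-- `p` is a simple path of `G₂` from `b` to `a` whose contraction along `π` is the walk `l`. -/
structure IsSimpleLift {V W : Type} (G₂ : WDigraph W) (π : W → V) (b a : W) (l : List V)
    (p : List W) : Prop where
  head?_eq : p.head? = some b
  getLast?_eq : p.getLast? = some a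
  nodup : p.Nodup
  map_mem : ∀ c ∈ p, π c ∈ l
  edge : ∀ e ∈ steps p, G₂.Edge e.1 e.2
  crossings_eq : crossings π p = steps l

namespace IsForestContraction

variable {V W : Type} {G₁ : WDigraph V} {G₂ : WDigraph W} {F : SimpleGraph W} {π : W → V}

theorem wWalk_eq (C : IsForestContraction G₂ F π G₁) {l : List V} {p : List W}
    (hp : ∀ e ∈ steps p, G₂.Edge e.1 e.2) (hl : crossings π p = steps l) :
    G₁.wWalk l = G₂.wWalk p := by
  classical
  rw [wWalk, wWalk, ← hl, crossings, steps_map]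
  generalize steps p = s at hp
  induction s with
  | nil => rfl
  | cons e s ih =>
    obtain ⟨he, hs⟩ := List.forall_mem_cons.1 hp
    by_cases hπ : π e.1 = π e.2
    · simpa [hπ, C.w_eq_zero _ _ ((C.adj_iff _ _).2 ⟨he, hπ⟩)] using ih hs
    · simp [hπ, C.w_map _ _ he hπ, ← ih hs]

theorem exists_cycle_map (C : IsForestContraction G₂ F π G₁) {p : List W}
    (hp : G₂.IsNondegenerateCycle p) :
    ∃ l, G₁.IsNondegenerateCycle l ∧ G₁.wWalk l = G₂.wWalk p := by
  cases p with
  | nil => exact absurd rfl hp.steps_ne_nil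
  | cons a p =>
  obtain ⟨m, hlast, hsteps⟩ := exists_steps_eq_filter_ne (π a) (p.map π)
  replace hsteps : steps (π a :: m) = crossings π (a :: p) := hsteps
  refine ⟨π a :: m, ⟨?_, ?_, ?_, ?_⟩, C.wWalk_eq hp.edge hsteps.symm⟩
  · rw [hlast, ← List.map_cons, List.getLast?_map, ← hp.head?_eq_getLast?]
    rfl
  · obtain ⟨⟨b, c⟩, hbc, hadj⟩ := hp.exists_not_adj_of_isAcyclic C.isAcyclic
    have hπ : π b ≠ π c := fun hπ => hadj ((C.adj_iff b c).2 ⟨hp.edge _ hbc, hπ⟩)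
    rw [hsteps]
    exact List.ne_nil_of_mem (mem_crossings.2 ⟨hπ, b, c, hbc, rfl, rfl⟩)
  · rintro ⟨x, y⟩ hxy
    obtain ⟨hne, b, c, hbc, rfl, rfl⟩ := mem_crossings.1 (hsteps ▸ hxy)
    exact C.edge_map b c (hp.edge _ hbc) hne
  · rintro ⟨x, y⟩ hxy hyx
    obtain ⟨hne, b, c, hbc, rfl, rfl⟩ := mem_crossings.1 (hsteps ▸ hxy)
    obtain ⟨-, c', b', hcb, hc, hb⟩ := mem_crossings.1 (hsteps ▸ hyx)
    obtain ⟨rfl, rfl⟩ := C.eq_of_map_eq b c c' b' (hp.edge _ hbc) (hp.edge _ hcb) hne hc hb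
    exact hp.antiparallelFree _ hbc hcb

theorem map_eq_of_mem_support (C : IsForestContraction G₂ F π G₁) {a b c : W} {p : F.Walk b a}
    (hc : c ∈ p.support) : π c = π b := by
  induction p with
  | nil => rw [List.mem_singleton.1 hc]
  | cons hadj p ih =>
    rcases List.mem_cons.1 hc with rfl | hc
    · rfl
    · exact (ih hc).trans ((C.adj_iff _ _).1 hadj).2.symm

theorem exists_isSimpleLift_singleton (C : IsForestContraction G₂ F π G₁) {b a : W}
    (h : π b = π a) : ∃ p, IsSimpleLift G₂ π b a [π b] p := by
  obtain ⟨p, hp⟩ := (C.reachable b a h).exists_isPath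
  have hedge : ∀ e ∈ steps p.support, G₂.Edge e.1 e.2 ∧ π e.1 = π e.2 := fun e he =>
    (C.adj_iff _ _).1 (isChain_iff_forall_mem_steps.1 p.isChain_adj_support e he)
  refine ⟨p.support, ?_, ?_, hp.support_nodup, ?_, fun e he => (hedge e he).1, ?_⟩
  · rw [List.head?_eq_some_head p.support_ne_nil, p.head_support]
  · rw [List.getLast?_eq_some_getLast p.support_ne_nil, p.getLast_support]
  · simpa using fun c hc => C.map_eq_of_mem_support hc
  · refine List.eq_nil_iff_forall_not_mem.2 fun e he => ?_
    obtain ⟨hne, c, d, hcd, hc, hd⟩ := mem_crossings.1 he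
    exact hne (hc ▸ hd ▸ (hedge (c, d) hcd).2)

theorem exists_isSimpleLift (C : IsForestContraction G₂ F π G₁) {x : V} {m : List V} {b a : W}
    (hb : π b = x) (ha : (x :: m).getLast? = some (π a)) (hnodup : (x :: m).Nodup)
    (hedge : ∀ e ∈ steps (x :: m), G₁.Edge e.1 e.2) :
    ∃ p, IsSimpleLift G₂ π b a (x :: m) p := by
  induction m generalizing x b with
  | nil =>
    subst hb
    exact C.exists_isSimpleLift_singleton (by simpa using ha)
  | cons y m ih =>
    rw [steps_cons_cons, List.forall_mem_cons] at hedge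
    obtain ⟨c, d, hcd, rfl, rfl⟩ := C.exists_edge x y hedge.1
    obtain ⟨p, hp⟩ := C.exists_isSimpleLift_singleton hb
    obtain ⟨q, hq⟩ := ih rfl (by simpa using ha) hnodup.of_cons hedge.2
    have hp_map : ∀ e ∈ p, π e = π c := fun e he => by simpa [hb] using hp.map_mem e he
    have hq_map : ∀ e ∈ q, π e ≠ π c := fun e he heq =>
      (List.nodup_cons.1 hnodup).1 (heq ▸ hq.map_mem e he)
    have hcross : π c ≠ π d := (hq_map d (List.mem_of_head? hq.head?_eq)).symm
    refine ⟨p ++ q, ?_, ?_, ?_, ?_, ?_, ?_⟩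
    · simp [hp.head?_eq]
    · simp [hq.getLast?_eq]
    · exact hp.nodup.append hq.nodup fun e hep heq => hq_map e heq (hp_map e hep)
    · exact List.forall_mem_append.2 ⟨fun e he => hp_map e he ▸ List.mem_cons_self,
        fun e he => List.mem_cons_of_mem _ (hq.map_mem e he)⟩
    · rw [steps_append_of_getLast? hp.getLast?_eq hq.head?_eq]
      simp only [List.forall_mem_append, List.forall_mem_cons]
      exact ⟨hp.edge, hcd, hq.edge⟩
    · rw [crossings_append hp.getLast?_eq hq.head?_eq hcross, hp.crossings_eq, hq.crossings_eq]
      rfl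

theorem exists_cycle_lift (C : IsForestContraction G₂ F π G₁) {l : List V}
    (hl : G₁.IsNondegenerateCycle l) (hnodup : l.dropLast.Nodup) :
    ∃ p, G₂.IsNondegenerateCycle p ∧ G₂.wWalk p = G₁.wWalk l := by
  obtain ⟨x, m, rfl⟩ := hl.exists_eq_cons_append_singleton
  rw [List.dropLast_concat] at hnodup
  have hlast : (x :: m).getLast? = some ((x :: m).getLast (List.cons_ne_nil x m)) :=
    List.getLast?_eq_some_getLast _
  generalize (x :: m).getLast _ = y at hlast
  have hsteps : steps (x :: m ++ [x]) = steps (x :: m) ++ [(y, x)] :=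
    steps_append_of_getLast? hlast rfl
  have hsubset : steps (x :: m) ⊆ steps (x :: m ++ [x]) := hsteps ▸ List.subset_append_left _ _
  have hmem : (y, x) ∈ steps (x :: m ++ [x]) := hsteps ▸ List.mem_concat_self
  have hyx : G₁.Edge y x := hl.edge (y, x) hmem
  obtain ⟨a, b, hab, rfl, rfl⟩ := C.exists_edge y x hyx
  obtain ⟨p, hp⟩ := C.exists_isSimpleLift rfl hlast hnodup fun e he => hl.edge e (hsubset he)
  have hp_steps : steps (p ++ [b]) = steps p ++ [(a, b)] :=
    steps_append_of_getLast? hp.getLast?_eq rfl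
  have hπ : π a ≠ π b := fun h => G₁.irrefl _ (h ▸ hyx)
  have hba : (b, a) ∉ steps p := fun hba => by
    have hxy : (π b, π a) ∈ steps (π b :: m) :=
      hp.crossings_eq ▸ mem_crossings.2 ⟨hπ.symm, b, a, hba, rfl, rfl⟩
    exact hl.antiparallelFree (π b, π a) (hsubset hxy) hmem
  have hedge : ∀ e ∈ steps (p ++ [b]), G₂.Edge e.1 e.2 := by
    rw [hp_steps]
    exact List.forall_mem_append.2 ⟨hp.edge, List.forall_mem_singleton.2 hab⟩
  have hcrossings : crossings π (p ++ [b]) = steps (π b :: m ++ [π b]) := by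
    rw [crossings_append hp.getLast?_eq rfl hπ, hp.crossings_eq, hsteps]
    simp [crossings, steps]
  refine ⟨p ++ [b], ⟨?_, ?_, hedge, ?_⟩, (C.wWalk_eq hedge hcrossings).symm⟩
  · simp [hp.head?_eq]
  · simp [hp_steps]
  · have hfree := antiparallelFree_of_nodup hp.nodup
    have hne : a ≠ b := fun h => hπ (congrArg π h)
    grind [AntiparallelFree]

theorem exists_isNondegenerateCycle_iff (C : IsForestContraction G₂ F π G₁) :
    (∃ l, G₁.IsNondegenerateCycle l) ↔ ∃ p, G₂.IsNondegenerateCycle p := by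
  refine ⟨fun ⟨l, hl⟩ => ?_, fun ⟨p, hp⟩ => ?_⟩
  · obtain ⟨c, -, hc, hnodup⟩ := hl.exists_isInfix_nodup
    obtain ⟨p, hp, -⟩ := C.exists_cycle_lift hc hnodup
    exact ⟨p, hp⟩
  · obtain ⟨l, hl, -⟩ := C.exists_cycle_map hp
    exact ⟨l, hl⟩

theorem minCycleWeight_eq (C : IsForestContraction G₂ F π G₁) :
    G₁.minCycleWeight = G₂.minCycleWeight := by
  refine le_antisymm (minCycleWeight_le_of_forall_exists fun p hp => ?_)
    (minCycleWeight_le_of_forall_exists fun l hl => ?_)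
  · obtain ⟨l, hl, hweight⟩ := C.exists_cycle_map hp
    exact ⟨l, hl, hweight.le⟩
  · obtain ⟨c, hcl, hc, hnodup⟩ := hl.exists_isInfix_nodup
    obtain ⟨p, hp, hweight⟩ := C.exists_cycle_lift hc hnodup
    exact ⟨p, hp, hweight.le.trans (wWalk_le_of_isInfix hcl)⟩

end IsForestContraction

end WDigraph

theorem isAcyclic_of_hom_injOn_edgeSet {α β : Type*} {G : SimpleGraph α} {H : SimpleGraph β}
    (f : G →g H) (hf : Set.InjOn (Sym2.map f) G.edgeSet) (hH : H.IsAcyclic) : G.IsAcyclic := by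
  intro a p hp
  have htrail : (p.map f).IsTrail := by
    rw [SimpleGraph.Walk.isTrail_def, SimpleGraph.Walk.edges_map]
    exact hp.edges_nodup.map_on fun e he e' he' h =>
      hf (p.edges_subset_edgeSet he) (p.edges_subset_edgeSet he') h
  have hnil : (p.map f).Nil :=
    SimpleGraph.Walk.isPath_iff_nil.1 ((hH.isPath_iff_isTrail _).2 htrail)
  exact hp.not_nil ((SimpleGraph.Walk.nil_map_iff f).1 hnil)

theorem isAcyclic_map {α β : Type*} {G : SimpleGraph α} (hG : G.IsAcyclic) (f : α ↪ β) :
    (G.map f).IsAcyclic := by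
  rcases isEmpty_or_nonempty α with hα | hα
  · have hbot : G.map f = ⊥ := SimpleGraph.ext <| by ext; simp [SimpleGraph.map_adj]
    exact hbot ▸ SimpleGraph.isAcyclic_bot
  have hleft : Function.LeftInverse (Function.invFun f) f :=
    Function.leftInverse_invFun f.injective
  refine isAcyclic_of_hom_injOn_edgeSet ⟨Function.invFun f, fun hxy => ?_⟩ ?_ hG
  · obtain ⟨a, b, hab, rfl, rfl⟩ := (SimpleGraph.map_adj f G _ _).1 hxy
    rwa [hleft, hleft]
  · rw [SimpleGraph.edgeSet_map]
    refine Set.LeftInvOn.injOn (f₁' := Sym2.map f) ?_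
    rintro _ ⟨e, -, rfl⟩
    simp [Sym2.map_map, hleft _]

theorem isAcyclic_hasse {α : Type*} [LinearOrder α] : (SimpleGraph.hasse α).IsAcyclic := by
  rw [SimpleGraph.isAcyclic_iff_forall_adj_isBridge]
  intro a b hab
  wlog hcov : a ⋖ b generalizing a b
  · rw [Sym2.eq_swap]
    exact this hab.symm (hab.resolve_left hcov)
  rw [SimpleGraph.isBridge_iff, SimpleGraph.reachable_iff_reflTransGen]
  suffices ∀ c, Relation.ReflTransGen ((SimpleGraph.hasse α).deleteEdges {s(a, b)}).Adj a c →
      c ≤ a from fun hreach => hcov.lt.not_ge (this b hreach)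
  intro c hreach
  induction hreach with
  | refl => exact le_rfl
  | @tail c d _ hcd hca =>
    obtain ⟨hcov' | hdc, hne⟩ := SimpleGraph.deleteEdges_adj.1 hcd
    · rcases hca.lt_or_eq with hlt | rfl
      · exact hcov'.ge_of_gt hlt
      · exact absurd (congrArg (s(c, ·)) (hcov'.unique_right hcov)) hne
    · exact hdc.le.trans hca

theorem isTree_pathGraph (n : ℕ) [NeZero n] : (SimpleGraph.pathGraph n).IsTree :=
  ⟨⟨SimpleGraph.pathGraph_preconnected n⟩, isAcyclic_hasse⟩

namespace WDigraph

section Split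

variable {V ι : Type} {G₁ : WDigraph V} {v : V} {T : SimpleGraph ι} {u : ι → V}
  {G₂ : WDigraph ({x // x ≠ v} ⊕ ι)}

/-- `G₂` arises from `G₁` by deleting the node `v` and inserting in its place the zero-weight
tree `T`, in which the node `i` takes over the edges between `v` and its neighbor `u i`. The
operation `Split(v)` of the paper is the case where `T` is a path. -/
structure IsTreeSplit (G₁ : WDigraph V) (v : V) (T : SimpleGraph ι) (u : ι → V)
    (G₂ : WDigraph ({x // x ≠ v} ⊕ ι)) : Prop where
  isTree : T.IsTree
  injective : Function.Injective u
  edge_iff_exists : ∀ x, G₁.Edge v x ↔ ∃ i, x = u i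
  inl_inl : ∀ x y : {x // x ≠ v},
    (G₂.Edge (Sum.inl x) (Sum.inl y) ↔ G₁.Edge x y) ∧ G₂.w (Sum.inl x) (Sum.inl y) = G₁.w x y
  inr_inr : ∀ i j,
    (G₂.Edge (Sum.inr i) (Sum.inr j) ↔ T.Adj i j) ∧ G₂.w (Sum.inr i) (Sum.inr j) = 0
  inl_inr : ∀ (x : {x // x ≠ v}) i,
    (G₂.Edge (Sum.inl x) (Sum.inr i) ↔ (x : V) = u i ∧ G₁.Edge x v) ∧
    (G₂.Edge (Sum.inr i) (Sum.inl x) ↔ (x : V) = u i ∧ G₁.Edge v x) ∧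
    ((x : V) = u i → G₂.w (Sum.inl x) (Sum.inr i) = G₁.w x v ∧
      G₂.w (Sum.inr i) (Sum.inl x) = G₁.w v x)

/-- The contraction map that undoes the splitting of `v`: it sends every new node to `v`. -/
abbrev unsplit : {x // x ≠ v} ⊕ ι → V := Sum.elim Subtype.val fun _ => v

namespace IsTreeSplit

theorem bidirected (h : IsTreeSplit G₁ v T u G₂) (hG₁ : G₁.Bidirected) : G₂.Bidirected := by
  rintro (x | i) (y | j) hedge
  · exact (h.inl_inl y x).1.2 (hG₁ _ _ ((h.inl_inl x y).1.1 hedge))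
  · obtain ⟨hx, hxv⟩ := (h.inl_inr x j).1.1 hedge
    exact (h.inl_inr x j).2.1.2 ⟨hx, hG₁ _ _ hxv⟩
  · obtain ⟨hy, hvy⟩ := (h.inl_inr y i).2.1.1 hedge
    exact (h.inl_inr y i).1.2 ⟨hy, hG₁ _ _ hvy⟩
  · exact (h.inr_inr j i).1.2 ((h.inr_inr i j).1.1 hedge).symm

theorem map_inr_adj_iff (h : IsTreeSplit G₁ v T u G₂) (a b : {x // x ≠ v} ⊕ ι) :
    (T.map Function.Embedding.inr).Adj a b ↔ G₂.Edge a b ∧ unsplit a = unsplit b := by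
  rcases a with x | i <;> rcases b with y | j
  · have hirrefl : G₂.Edge (Sum.inl x) (Sum.inl y) → (x : V) ≠ y := fun hedge hxy =>
      G₁.irrefl y (hxy ▸ (h.inl_inl x y).1.1 hedge)
    simpa [SimpleGraph.map_adj] using hirrefl
  · simp [SimpleGraph.map_adj, x.2]
  · simp [SimpleGraph.map_adj, y.2.symm]
  · simp [SimpleGraph.map_adj, h.inr_inr]

theorem reachable_of_unsplit_eq (h : IsTreeSplit G₁ v T u G₂) {a b : {x // x ≠ v} ⊕ ι}
    (hab : unsplit a = unsplit b) : (T.map Function.Embedding.inr).Reachable a b := by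
  rcases a with x | i <;> rcases b with y | j
  · exact Subtype.ext hab ▸ SimpleGraph.Reachable.rfl
  · exact absurd hab x.2
  · exact absurd hab.symm y.2
  · exact (h.isTree.connected i j).map (SimpleGraph.Embedding.map Function.Embedding.inr T).toHom

theorem exists_edge (h : IsTreeSplit G₁ v T u G₂) (hG₁ : G₁.Bidirected) {x y : V}
    (hxy : G₁.Edge x y) : ∃ a b, G₂.Edge a b ∧ unsplit a = x ∧ unsplit b = y := by
  rcases eq_or_ne x v with rfl | hx
  · obtain ⟨i, rfl⟩ := (h.edge_iff_exists y).1 hxy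
    have hu : u i ≠ x := fun hu => G₁.irrefl x (hu ▸ hxy)
    exact ⟨Sum.inr i, Sum.inl ⟨u i, hu⟩, (h.inl_inr ⟨u i, hu⟩ i).2.1.2 ⟨rfl, hxy⟩, rfl, rfl⟩
  rcases eq_or_ne y v with rfl | hy
  · obtain ⟨i, rfl⟩ := (h.edge_iff_exists x).1 (hG₁ _ _ hxy)
    exact ⟨Sum.inl ⟨u i, hx⟩, Sum.inr i, (h.inl_inr ⟨u i, hx⟩ i).1.2 ⟨rfl, hxy⟩, rfl, rfl⟩
  · exact ⟨Sum.inl ⟨x, hx⟩, Sum.inl ⟨y, hy⟩, (h.inl_inl ⟨x, hx⟩ ⟨y, hy⟩).1.2 hxy, rfl, rfl⟩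

theorem eq_of_unsplit_eq (h : IsTreeSplit G₁ v T u G₂) {a b c d : {x // x ≠ v} ⊕ ι}
    (hab : G₂.Edge a b) (hcd : G₂.Edge c d) (hne : unsplit a ≠ unsplit b)
    (hcb : unsplit c = unsplit b) (hda : unsplit d = unsplit a) : c = b ∧ d = a := by
  have hinj := h.injective
  have hinl_inr : ∀ x i, G₂.Edge (Sum.inl x) (Sum.inr i) → (x : V) = u i := fun x i hxi =>
    ((h.inl_inr x i).1.1 hxi).1
  have hinr_inl : ∀ x i, G₂.Edge (Sum.inr i) (Sum.inl x) → (x : V) = u i := fun x i hix =>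
    ((h.inl_inr x i).2.1.1 hix).1
  rcases a with x | i <;> rcases b with y | j <;> rcases c with y' | j' <;>
    rcases d with x' | i' <;> simp only [Sum.elim_inl, Sum.elim_inr] at hne hcb hda <;>
    grind [Function.Injective]

theorem isForestContraction (h : IsTreeSplit G₁ v T u G₂) (hG₁ : G₁.Bidirected) :
    IsForestContraction G₂ (T.map Function.Embedding.inr) unsplit G₁ where
  isAcyclic := isAcyclic_map h.isTree.isAcyclic _
  adj_iff := h.map_inr_adj_iff
  reachable _ _ := h.reachable_of_unsplit_eq
  w_eq_zero a b hab := by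
    obtain ⟨i, j, -, rfl, rfl⟩ := (SimpleGraph.map_adj _ _ _ _).1 hab
    exact (h.inr_inr i j).2
  edge_map := by
    rintro (x | i) (y | j) hedge hne
    · exact (h.inl_inl x y).1.1 hedge
    · exact ((h.inl_inr x j).1.1 hedge).2
    · exact ((h.inl_inr y i).2.1.1 hedge).2
    · exact absurd rfl hne
  w_map := by
    rintro (x | i) (y | j) hedge hne
    · exact (h.inl_inl x y).2.symm
    · exact ((h.inl_inr x j).2.2 ((h.inl_inr x j).1.1 hedge).1).1.symm
    · exact ((h.inl_inr y i).2.2 ((h.inl_inr y i).2.1.1 hedge).1).2.symm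
    · exact absurd rfl hne
  exists_edge _ _ := h.exists_edge hG₁
  eq_of_map_eq _ _ _ _ := h.eq_of_unsplit_eq

end IsTreeSplit

end Split

end WDigraph

theorem stmt5_general {V ι : Type} {G1 : WDigraph V} (hbi : G1.Bidirected) {v : V}
    {T : SimpleGraph ι} {u : ι → V} {G2 : WDigraph ({x : V // x ≠ v} ⊕ ι)}
    (h : G1.IsTreeSplit v T u G2) :
    G2.Bidirected ∧
    ((∃ l, G1.IsCycle l ∧ ¬ WDigraph.Degenerate l) ↔
      (∃ l, G2.IsCycle l ∧ ¬ WDigraph.Degenerate l)) ∧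
    G1.minCycleWeight = G2.minCycleWeight := by
  have C := h.isForestContraction hbi
  refine ⟨h.bidirected hbi, ?_, C.minCycleWeight_eq⟩
  simpa only [WDigraph.isNondegenerateCycle_iff] using C.exists_isNondegenerateCycle_iff

/-- Let `G1` be a simple bidirected graph with nonnegative
edge weights and let `v` be a node of `G1` with exactly `d` neighbors
`u 0, …, u (d-1)`, where `d ≥ 4`.  Let `G2` be the graph obtained from `G1` by
the operation `Split(v)`: it lives on the nodes of `G1` other than `v`
together with `d` new nodes `v_0, …, v_{d-1}` (modelled by `Fin d`), it joins
consecutive new nodes by zero-weight edges in both directions, it replaces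
each edge `u i → v` by `u i → v_i` and each edge `v → u i` by `v_i → u i` of
the same weight, and it deletes `v`.  Then `G2` is a simple bidirected graph
(simplicity being built into `WDigraph`), `G1` has a non-degenerate cycle iff
`G2` does, and in that case the minimum weight of a non-degenerate cycle of
`G1` equals the minimum weight of a non-degenerate cycle of `G2`. -/
theorem stmt5 {V : Type} (G1 : WDigraph V) (hbi : G1.Bidirected)
    (v : V) (d : ℕ) (hd : 4 ≤ d) (u : Fin d → V) (hu : Function.Injective u)
    (hnb : ∀ x : V, G1.Edge v x ↔ ∃ i, x = u i)
    (G2 : WDigraph ({x : V // x ≠ v} ⊕ Fin d))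
    (h11 : ∀ x y : {x : V // x ≠ v},
      (G2.Edge (Sum.inl x) (Sum.inl y) ↔ G1.Edge (x : V) (y : V)) ∧
      G2.w (Sum.inl x) (Sum.inl y) = G1.w (x : V) (y : V))
    (h22 : ∀ i j : Fin d,
      (G2.Edge (Sum.inr i) (Sum.inr j) ↔ ((i : ℕ) + 1 = (j : ℕ) ∨ (j : ℕ) + 1 = (i : ℕ))) ∧
      G2.w (Sum.inr i) (Sum.inr j) = 0)
    (h12 : ∀ (x : {x : V // x ≠ v}) (i : Fin d),
      (G2.Edge (Sum.inl x) (Sum.inr i) ↔ ((x : V) = u i ∧ G1.Edge (x : V) v)) ∧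
      (G2.Edge (Sum.inr i) (Sum.inl x) ↔ ((x : V) = u i ∧ G1.Edge v (x : V))) ∧
      ((x : V) = u i →
        G2.w (Sum.inl x) (Sum.inr i) = G1.w (x : V) v ∧
        G2.w (Sum.inr i) (Sum.inl x) = G1.w v (x : V))) :
    G2.Bidirected ∧
    ((∃ l, G1.IsCycle l ∧ ¬ WDigraph.Degenerate l) ↔
      (∃ l, G2.IsCycle l ∧ ¬ WDigraph.Degenerate l)) ∧
    ((∃ l, G1.IsCycle l ∧ ¬ WDigraph.Degenerate l) →
      sInf {x | ∃ l, G1.IsCycle l ∧ ¬ WDigraph.Degenerate l ∧ G1.wWalk l = x} =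
        sInf {x | ∃ l, G2.IsCycle l ∧ ¬ WDigraph.Degenerate l ∧ G2.wWalk l = x}) := by
  have : NeZero d := ⟨by lia⟩
  have h : G1.IsTreeSplit v (SimpleGraph.pathGraph d) u G2 := ⟨isTree_pathGraph d, hu, hnb, h11,
    fun i j => ⟨(h22 i j).1.trans SimpleGraph.pathGraph_adj.symm, (h22 i j).2⟩, h12⟩
  obtain ⟨hG2, hiff, hweight⟩ := stmt5_general hbi h
  exact ⟨hG2, hiff, fun _ => hweight⟩
end

section
/- Let G△ be an n-node simple undirected plane triangulation whose faces carry nonnegative weights summing to 1 such that the weight of each face is at most 1/4, and let T be a spanning tree of G△. Then there exists an edge e of G△ not in T such that the total weight of the faces of G△ inside the unique simple cycle of T ∪ {e} is at most 3/4 and the total weight of the faces of G△ outside this cycle is at most 3/4. -/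
open scoped BigOperators

/-- A plane embedding of an (undirected) simple graph `G`: nodes are drawn as
distinct points, each edge is drawn as a simple arc joining its endpoints,
and two arcs meet only at common endpoints and avoid all other nodes. -/
structure UPlaneEmbedding {V : Type} (G : SimpleGraph V) where
  pos : V → ℝ × ℝ
  arc : V → V → ℝ → ℝ × ℝ
  pos_inj : Function.Injective pos
  arc_symm : ∀ u v t, arc v u t = arc u v (1 - t)
  arc_cont : ∀ u v, G.Adj u v → ContinuousOn (arc u v) (Set.Icc 0 1)
  arc_start : ∀ u v, G.Adj u v → arc u v 0 = pos u
  arc_end : ∀ u v, G.Adj u v → arc u v 1 = pos v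
  arc_inj : ∀ u v, G.Adj u v → Set.InjOn (arc u v) (Set.Icc 0 1)
  arc_avoid : ∀ u v, G.Adj u v → ∀ x : V, pos x ∈ arc u v '' Set.Icc 0 1 → x = u ∨ x = v
  arc_meet : ∀ u v x y, G.Adj u v → G.Adj x y → ({u, v} : Set V) ≠ {x, y} →
    arc u v '' Set.Icc 0 1 ∩ arc x y '' Set.Icc 0 1 ⊆
      ({pos u, pos v} : Set (ℝ × ℝ)) ∩ {pos x, pos y}

variable {V : Type}

/-- The drawing (point set in the plane) of a set of undirected edges. -/
def udrawing {G : SimpleGraph V} (emb : UPlaneEmbedding G) (E : Set (Sym2 V)) :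
    Set (ℝ × ℝ) :=
  ⋃ u : V, ⋃ v : V, ⋃ (_ : s(u, v) ∈ E ∧ G.Adj u v), emb.arc u v '' Set.Icc 0 1

/-- The drawing of the whole graph. -/
def ufullDrawing {G : SimpleGraph V} (emb : UPlaneEmbedding G) : Set (ℝ × ℝ) :=
  udrawing emb G.edgeSet

/-- A face of the embedded graph: a connected component of the complement of
its drawing. -/
def IsUFace {G : SimpleGraph V} (emb : UPlaneEmbedding G) (F : Set (ℝ × ℝ)) : Prop :=
  ∃ x, x ∉ ufullDrawing emb ∧ F = connectedComponentIn (ufullDrawing emb)ᶜ x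

/-- The node `v` lies on (the boundary of) the face `F`. -/
def OnFace {G : SimpleGraph V} (emb : UPlaneEmbedding G) (F : Set (ℝ × ℝ)) (v : V) :
    Prop :=
  emb.pos v ∈ closure F

/-- The embedded graph is a plane triangulation: every face is bounded by a
triangle of the graph. -/
def IsTriangulation {G : SimpleGraph V} (emb : UPlaneEmbedding G) : Prop :=
  ∀ F, IsUFace emb F →
    {v : V | OnFace emb F v}.ncard = 3 ∧
    (∀ a b : V, OnFace emb F a → OnFace emb F b → a ≠ b → G.Adj a b) ∧
    frontier F =
      udrawing emb {e | ∃ a b : V, e = s(a, b) ∧ OnFace emb F a ∧ OnFace emb F b ∧ G.Adj a b}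

/-- The face `F` (disjoint from the closed curve `J`) lies inside `J`. -/
def FaceInside (J F : Set (ℝ × ℝ)) : Prop :=
  ∀ x ∈ F, Bornology.IsBounded (connectedComponentIn Jᶜ x)

/-- The face `F` (disjoint from the closed curve `J`) lies outside `J`. -/
def FaceOutside (J F : Set (ℝ × ℝ)) : Prop :=
  ∀ x ∈ F, ¬ Bornology.IsBounded (connectedComponentIn Jᶜ x)

/-!
The faces of the triangulation and the edges outside the spanning tree `T` form a tree, whose
maximum degree is at most three. Deleting a dual edge `e` splits the faces into those inside and
those outside the fundamental cycle of `e`. A face has weight at most `1/4`, so at each face some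
incident dual edge leads to a part of weight at least `1/4`; choosing such a part minimal under
inclusion makes the other side of that edge weigh at least `1/4` too.

The topology is reduced to continuous logarithms. A compact plane set `K` is called log-acyclic if
every continuous nonvanishing complex function on `K` has a continuous logarithm. By Eilenberg's
criterion such a set does not separate the plane. Arcs are log-acyclic, and gluing two log-acyclic
sets along a connected set preserves the property; hence drawings of trees do not separate the
plane. Gluing along two points produces at most two complementary regions, which bounds the number
of regions of `T ∪ {e}`. That the two faces at `e` are separated by the cycle follows from
Janiszewski's theorem: if neither the cycle nor the rest of the drawing separates two faces, and
the two sets meet in a connected set, then their union does not separate them either.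
-/

open Set Filter Topology Bornology

section ContinuousLogarithms

variable {X : Type*} [TopologicalSpace X]

lemma apply_eq_of_exp_eq_const {S : Set X} (hS : IsPreconnected S) {g : X → ℂ}
    (hg : ContinuousOn g S) {w : ℂ} (hw : ∀ x ∈ S, Complex.exp (g x) = w)
    {x y : X} (hx : x ∈ S) (hy : y ∈ S) : g x = g y :=
  Complex.isCoveringMap_exp.constOn_of_comp hS hg
    (fun a ha b hb => Subtype.ext ((hw a ha).trans (hw b hb).symm)) hx hy

/-- The function `f` has a continuous branch of the logarithm on the set `K`; in particular `f`
is continuous and does not vanish on `K`. -/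
def HasContinuousLogOn (f : X → ℂ) (K : Set X) : Prop :=
  ∃ g : X → ℂ, ContinuousOn g K ∧ ∀ x ∈ K, Complex.exp (g x) = f x

namespace HasContinuousLogOn

variable {f₁ f₂ f : X → ℂ} {K L : Set X}

lemma congr (h : HasContinuousLogOn f₁ K) (heq : ∀ x ∈ K, f₂ x = f₁ x) :
    HasContinuousLogOn f₂ K :=
  let ⟨g, hg, hexp⟩ := h
  ⟨g, hg, fun x hx => (hexp x hx).trans (heq x hx).symm⟩

lemma mul (h₁ : HasContinuousLogOn f₁ K) (h₂ : HasContinuousLogOn f₂ K) :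
    HasContinuousLogOn (fun x => f₁ x * f₂ x) K :=
  let ⟨g₁, hg₁, hexp₁⟩ := h₁
  let ⟨g₂, hg₂, hexp₂⟩ := h₂
  ⟨fun x => g₁ x + g₂ x, hg₁.add hg₂, fun x hx => by
    rw [Complex.exp_add, hexp₁ x hx, hexp₂ x hx]⟩

lemma inv (h : HasContinuousLogOn f K) : HasContinuousLogOn (fun x => (f x)⁻¹) K :=
  let ⟨g, hg, hexp⟩ := h
  ⟨fun x => -g x, hg.neg, fun x hx => by rw [Complex.exp_neg, hexp x hx]⟩

lemma of_mem_slitPlane (hf : ContinuousOn f K) (h : ∀ x ∈ K, f x ∈ Complex.slitPlane) :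
    HasContinuousLogOn f K :=
  ⟨fun x => Complex.log (f x), hf.clog h,
    fun x hx => Complex.exp_log (Complex.slitPlane_ne_zero (h x hx))⟩

lemma of_simplyConnectedSpace [LocallyPathConnectedSpace X] [SimplyConnectedSpace X]
    (hf : Continuous f) (hf0 : ∀ x, f x ≠ 0) : HasContinuousLogOn f univ := by
  obtain ⟨x₀⟩ : Nonempty X := inferInstance
  obtain ⟨g, ⟨-, hg⟩, -⟩ := Complex.isCoveringMapOn_exp.existsUnique_continuousMap_lifts
    ⟨f, hf⟩ (a₀ := x₀) (Complex.exp_log (hf0 x₀)) hf0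
  exact ⟨g, g.continuous.continuousOn, fun x _ => congrFun hg x⟩

lemma of_eqOn_inter (hK : IsClosed K) (hL : IsClosed L) {g k : X → ℂ} (hg : ContinuousOn g K)
    (hk : ContinuousOn k L) (hgk : EqOn g k (K ∩ L)) (hgf : ∀ x ∈ K, Complex.exp (g x) = f x)
    (hkf : ∀ x ∈ L, Complex.exp (k x) = f x) : HasContinuousLogOn f (K ∪ L) := by
  classical
  have hKg : EqOn (K.piecewise g k) g K := piecewise_eqOn K g k
  have hLk : EqOn (K.piecewise g k) k L := fun x hxL => by
    by_cases hxK : x ∈ K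
    · rw [hKg hxK, hgk ⟨hxK, hxL⟩]
    · exact piecewise_eq_of_notMem K g k hxK
  refine ⟨K.piecewise g k, (hg.congr hKg).union_of_isClosed (hk.congr hLk) hK hL, ?_⟩
  rintro x (hx | hx)
  · rw [hKg hx, hgf x hx]
  · rw [hLk hx, hkf x hx]

lemma union (hK : IsClosed K) (hL : IsClosed L) (hKL : IsPreconnected (K ∩ L))
    (h₁ : HasContinuousLogOn f K) (h₂ : HasContinuousLogOn f L) :
    HasContinuousLogOn f (K ∪ L) := by
  obtain ⟨g, hg, hgf⟩ := h₁
  obtain ⟨k, hk, hkf⟩ := h₂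
  have hexp : ∀ x ∈ K ∩ L, Complex.exp (g x - k x) = 1 := fun x hx => by
    rw [Complex.exp_sub, hgf x hx.1, ← hkf x hx.2, div_self (Complex.exp_ne_zero _)]
  rcases (K ∩ L).eq_empty_or_nonempty with hempty | ⟨x₀, hx₀⟩
  · exact of_eqOn_inter hK hL hg hk (by simp [hempty]) hgf hkf
  have hsub : ∀ x ∈ K ∩ L, g x - k x = g x₀ - k x₀ := fun x hx =>
    apply_eq_of_exp_eq_const hKL
      ((hg.mono inter_subset_left).sub (hk.mono inter_subset_right)) hexp hx hx₀
  refine of_eqOn_inter (k := fun x => k x + (g x₀ - k x₀)) hK hL hg (hk.add continuousOn_const)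
    (fun x hx => ?_) hgf fun x hx => ?_
  · simp [← hsub x hx]
  · rw [Complex.exp_add, hkf x hx, hexp x₀ hx₀, mul_one]

end HasContinuousLogOn

/-- Every continuous nonvanishing complex function on `A` has a continuous logarithm on `A`; for
compact plane sets this says that `A` does not separate the plane. -/
def LogAcyclic (A : Set X) : Prop :=
  ∀ f : X → ℂ, ContinuousOn f A → (∀ x ∈ A, f x ≠ 0) → HasContinuousLogOn f A

namespace LogAcyclic

variable {A B : Set X}

lemma union (hA : LogAcyclic A) (hB : LogAcyclic B) (hAc : IsClosed A) (hBc : IsClosed B)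
    (hAB : IsPreconnected (A ∩ B)) : LogAcyclic (A ∪ B) := fun f hf hf0 =>
  .union hAc hBc hAB (hA f (hf.mono subset_union_left) fun x hx => hf0 x (.inl hx))
    (hB f (hf.mono subset_union_right) fun x hx => hf0 x (.inr hx))

lemma empty : LogAcyclic (∅ : Set X) := fun _ _ _ => ⟨0, by simp, by simp⟩

lemma exists_logs_eq_at {f : X → ℂ} (hA : LogAcyclic A) (hB : LogAcyclic B)
    (hf : ContinuousOn f (A ∪ B)) (hf0 : ∀ x ∈ A ∪ B, f x ≠ 0) {a b : X} (ha : a ∈ A ∩ B)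
    (hb : b ∈ A ∩ B) :
    ∃ g k : X → ℂ, ContinuousOn g A ∧ ContinuousOn k B ∧ (∀ x ∈ A, Complex.exp (g x) = f x) ∧
      (∀ x ∈ B, Complex.exp (k x) = f x) ∧ g a = k a ∧
      ∃ m : ℤ, g b = k b + m * (2 * Real.pi * Complex.I) := by
  obtain ⟨g, hg, hgf⟩ := hA f (hf.mono subset_union_left) fun x hx => hf0 x (.inl hx)
  obtain ⟨k, hk, hkf⟩ := hB f (hf.mono subset_union_right) fun x hx => hf0 x (.inr hx)
  have hkf' : ∀ x ∈ B, Complex.exp (k x + (g a - k a)) = f x := fun x hx => by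
    rw [Complex.exp_add, Complex.exp_sub, hkf x hx, hgf a ha.1, hkf a ha.2,
      div_self (hf0 a (.inl ha.1)), mul_one]
  exact ⟨g, fun x => k x + (g a - k a), hg, hk.add continuousOn_const, hgf, hkf', by simp,
    Complex.exp_eq_exp_iff_exists_int.1 ((hgf b hb.1).trans (hkf' b hb.2).symm)⟩

/-- A union of two log-acyclic sets meeting in two points has a single hole: the integers
`m₁, m₂` count how often `f₁, f₂` wind around it. -/
lemma exists_winding_numbers (hA : LogAcyclic A) (hB : LogAcyclic B) (hAc : IsClosed A)
    (hBc : IsClosed B) {a b : X} (hAB : A ∩ B = {a, b}) {f₁ f₂ : X → ℂ}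
    (hf₁ : ContinuousOn f₁ (A ∪ B)) (hf₁0 : ∀ x ∈ A ∪ B, f₁ x ≠ 0)
    (hf₂ : ContinuousOn f₂ (A ∪ B)) (hf₂0 : ∀ x ∈ A ∪ B, f₂ x ≠ 0) :
    ∃ m₁ m₂ : ℤ, ∀ i j : ℤ, i * m₁ + j * m₂ = 0 →
      HasContinuousLogOn (fun x => f₁ x ^ i * f₂ x ^ j) (A ∪ B) := by
  have ha : a ∈ A ∩ B := by simp [hAB]
  have hb : b ∈ A ∩ B := by simp [hAB]
  obtain ⟨g₁, k₁, hg₁, hk₁, hgf₁, hkf₁, ha₁, m₁, hm₁⟩ := exists_logs_eq_at hA hB hf₁ hf₁0 ha hb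
  obtain ⟨g₂, k₂, hg₂, hk₂, hgf₂, hkf₂, ha₂, m₂, hm₂⟩ := exists_logs_eq_at hA hB hf₂ hf₂0 ha hb
  refine ⟨m₁, m₂, fun i j hij => .of_eqOn_inter (g := fun x => i * g₁ x + j * g₂ x)
    (k := fun x => i * k₁ x + j * k₂ x) hAc hBc (by fun_prop) (by fun_prop) ?_ ?_ ?_⟩
  · have hij' : (i * m₁ + j * m₂ : ℂ) = 0 := mod_cast hij
    rw [hAB]
    rintro x (rfl | rfl)
    · simp only [ha₁, ha₂]
    · simp only [hm₁, hm₂]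
      linear_combination (2 * Real.pi * Complex.I) * hij'
  · intro x hx
    rw [Complex.exp_add, Complex.exp_int_mul, Complex.exp_int_mul, hgf₁ x hx, hgf₂ x hx]
  · intro x hx
    rw [Complex.exp_add, Complex.exp_int_mul, Complex.exp_int_mul, hkf₁ x hx, hkf₂ x hx]

end LogAcyclic

end ContinuousLogarithms

section Components

variable {X : Type*} [TopologicalSpace X]

lemma connectedComponentIn_eq_of_mem_closure {S U : Set X} (hS : IsPreconnected S) (hSU : S ⊆ U)
    {x z : X} (hx : x ∈ S) (hz : z ∈ closure S) (hzU : z ∈ U) :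
    connectedComponentIn U x = connectedComponentIn U z :=
  connectedComponentIn_eq <|
    (hS.subset_closure (subset_insert z S) (insert_subset hz subset_closure)
      ).subset_connectedComponentIn (mem_insert_of_mem z hx) (insert_subset hzU hSU)
      (mem_insert z S)

lemma connectedComponentIn_eq_of_subset {U W : Set X} (hUW : U ⊆ W) {x y : X} (hy : y ∈ U)
    (h : connectedComponentIn U x = connectedComponentIn U y) :
    connectedComponentIn W x = connectedComponentIn W y :=
  connectedComponentIn_eq (connectedComponentIn_mono x hUW (h ▸ mem_connectedComponentIn hy))

lemma frontier_connectedComponentIn_compl_subset [LocallyConnectedSpace X] {K : Set X}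
    (hK : IsClosed K) (x : X) : frontier (connectedComponentIn Kᶜ x) ⊆ K := by
  intro z hz
  by_contra hzK
  rcases (connectedComponentIn Kᶜ x).eq_empty_or_nonempty with hempty | ⟨y, hy⟩
  · simp [hempty] at hz
  · have hyz := connectedComponentIn_eq_of_mem_closure isPreconnected_connectedComponentIn
      (connectedComponentIn_subset Kᶜ x) hy hz.1 hzK
    rw [hK.isOpen_compl.connectedComponentIn.frontier_eq, connectedComponentIn_eq hy, hyz] at hz
    exact hz.2 (mem_connectedComponentIn hzK)

lemma exists_mem_inter_frontier {S t : Set X} (hS : IsPreconnected S) (ht : (S ∩ t).Nonempty)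
    (htc : (S ∩ tᶜ).Nonempty) : (S ∩ frontier t).Nonempty := by
  by_contra hempty
  rw [not_nonempty_iff_eq_empty] at hempty
  have hcover : S ⊆ interior t ∪ interior tᶜ := fun x hx => by
    have : x ∉ frontier t := fun hxt => (hempty ▸ ⟨hx, hxt⟩ : x ∈ (∅ : Set X))
    rw [interior_compl]
    by_cases hxt : x ∈ closure t
    · exact .inl (by_contra fun hxi => this ⟨hxt, hxi⟩)
    · exact .inr hxt
  obtain ⟨x, -, hx, hx'⟩ := hS _ _ isOpen_interior isOpen_interior hcover
    (ht.imp fun x hx => ⟨hx.1, (hcover hx.1).resolve_right fun h => interior_subset h hx.2⟩)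
    (htc.imp fun x hx => ⟨hx.1, (hcover hx.1).resolve_left fun h => hx.2 (interior_subset h)⟩)
  exact interior_subset hx' (interior_subset hx)

end Components

section UnboundedComponent

variable {E : Type*} [NormedAddCommGroup E] [NormedSpace ℝ E]

lemma isPreconnected_setOf_lt_norm (hE : 1 < Module.rank ℝ E) {R : ℝ} (hR : 0 ≤ R) :
    IsPreconnected {z : E | R < ‖z‖} := by
  have hpolar : (fun y : E × ℝ => y.2 • y.1) '' (Metric.sphere (0 : E) 1 ×ˢ Ioi R) =
      {z : E | R < ‖z‖} := by
    ext z
    constructor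
    · rintro ⟨⟨y, t⟩, ⟨hy, ht : R < t⟩, rfl⟩
      have hy : ‖y‖ = 1 := mem_sphere_zero_iff_norm.1 hy
      simpa [norm_smul, hy, abs_of_pos (hR.trans_lt ht)] using ht
    · intro hz
      have hz0 : ‖z‖ ≠ 0 := (hR.trans_lt hz).ne'
      exact ⟨(‖z‖⁻¹ • z, ‖z‖), ⟨by simp [norm_smul, hz0], hz⟩, by simp [smul_smul, hz0]⟩
  exact hpolar ▸ ((isPreconnected_sphere hE 0 1).prod isPreconnected_Ioi).image _ (by fun_prop)

lemma connectedComponentIn_compl_eq_of_not_isBounded (hE : 1 < Module.rank ℝ E) {K : Set E}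
    (hK : IsBounded K) {x y : E} (hx : ¬ IsBounded (connectedComponentIn Kᶜ x))
    (hy : ¬ IsBounded (connectedComponentIn Kᶜ y)) :
    connectedComponentIn Kᶜ x = connectedComponentIn Kᶜ y := by
  obtain ⟨R, hR, hKR⟩ := hK.exists_pos_norm_le
  have hfarK : {z : E | R < ‖z‖} ⊆ Kᶜ := fun z hz hzK => (hKR z hzK).not_gt hz
  have exists_far : ∀ {U : Set E}, ¬ IsBounded U → ∃ z ∈ U, R < ‖z‖ := fun {U} hU => by
    by_contra! hle
    exact hU (isBounded_iff_forall_norm_le.2 ⟨R, hle⟩)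
  obtain ⟨a, hax, ha⟩ := exists_far hx
  obtain ⟨b, hby, hb⟩ := exists_far hy
  rw [connectedComponentIn_eq hax, connectedComponentIn_eq hby]
  exact connectedComponentIn_eq <|
    (isPreconnected_setOf_lt_norm hE hR.le).subset_connectedComponentIn ha hfarK hb

end UnboundedComponent

section Arcs

lemma exists_continuous_leftInvOn_of_injOn_Icc {X : Type*} [TopologicalSpace X] [NormalSpace X]
    [T2Space X] {γ : ℝ → X} (hγ : ContinuousOn γ (Icc 0 1)) (hinj : InjOn γ (Icc 0 1)) :
    ∃ e : X → ℝ, Continuous e ∧ LeftInvOn e γ (Icc 0 1) := by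
  have hemb : IsClosedEmbedding ((Icc (0 : ℝ) 1).domRestrict γ) :=
    (continuousOn_iff_continuous_domRestrict.1 hγ).isClosedEmbedding hinj.injective
  obtain ⟨e, he⟩ := ContinuousMap.exists_extension hemb ⟨Subtype.val, continuous_subtype_val⟩
  exact ⟨e, e.continuous, fun t ht => congrArg (fun f => f ⟨t, ht⟩) he⟩

lemma LogAcyclic.image_Icc {X : Type*} [TopologicalSpace X] [NormalSpace X]
    [T2Space X] {γ : ℝ → X} (hγ : ContinuousOn γ (Icc 0 1)) (hinj : InjOn γ (Icc 0 1)) :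
    LogAcyclic (γ '' Icc 0 1) := by
  intro f hf hf0
  obtain ⟨e, he, heγ⟩ := exists_continuous_leftInvOn_of_injOn_Icc hγ hinj
  have hproj : Continuous fun t : ℝ => γ (projIcc 0 1 zero_le_one t) :=
    (continuousOn_iff_continuous_domRestrict.1 hγ).comp continuous_projIcc
  have hmem : ∀ t : ℝ, γ (projIcc 0 1 zero_le_one t) ∈ γ '' Icc 0 1 := fun t =>
    mem_image_of_mem γ (projIcc 0 1 zero_le_one t).2
  obtain ⟨g, hg, hgf⟩ : HasContinuousLogOn (fun t : ℝ => f (γ (projIcc 0 1 zero_le_one t))) univ :=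
    .of_simplyConnectedSpace (hf.comp_continuous hproj hmem) fun t => hf0 _ (hmem t)
  refine ⟨g ∘ e, (continuousOn_univ.1 hg).comp_continuousOn he.continuousOn, ?_⟩
  rintro _ ⟨t, ht, rfl⟩
  simp only [Function.comp_apply, heγ ht, hgf t (mem_univ t), projIcc_of_mem _ ht]

lemma not_injective_of_continuous_real {E : Type*} [NormedAddCommGroup E] [NormedSpace ℝ E]
    (hE : 1 < Module.rank ℝ E) {f : E → ℝ} (hf : Continuous f) : ¬ Function.Injective f := by
  intro hinj
  have : Nontrivial E := rank_pos_iff_nontrivial.1 (zero_lt_one.trans hE)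
  obtain ⟨a, b, hab⟩ : ∃ a b : E, f a < f b := by
    obtain ⟨a, b, hne⟩ := exists_pair_ne E
    rcases (hinj.ne hne).lt_or_gt with h | h
    exacts [⟨a, b, h⟩, ⟨b, a, h⟩]
  obtain ⟨t, hat, htb⟩ := exists_between hab
  obtain ⟨c, rfl⟩ := mem_range_of_exists_le_of_exists_ge hf ⟨a, hat.le⟩ ⟨b, htb.le⟩
  have hpunct : IsPreconnected ({c}ᶜ : Set E) :=
    (isConnected_compl_singleton_of_one_lt_rank hE c).isPreconnected
  obtain ⟨x, hxc, hx⟩ := hpunct.intermediate_value (a := a) (b := b)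
    (by rintro rfl; exact hat.false) (by rintro rfl; exact htb.false) hf.continuousOn
    ⟨hat.le, htb.le⟩
  exact hxc (hinj hx)

lemma dense_compl_image_Icc {E : Type*} [NormedAddCommGroup E] [NormedSpace ℝ E]
    (hE : 1 < Module.rank ℝ E) {γ : ℝ → E} (hγ : ContinuousOn γ (Icc 0 1))
    (hinj : InjOn γ (Icc 0 1)) : Dense (γ '' Icc 0 1)ᶜ := by
  rw [← interior_eq_empty_iff_dense_compl]
  by_contra hne
  obtain ⟨x, hx⟩ := nonempty_iff_ne_empty.2 hne
  obtain ⟨r, hr, hball⟩ := Metric.mem_nhds_iff.1 (mem_interior_iff_mem_nhds.1 hx)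
  obtain ⟨e, he, heγ⟩ := exists_continuous_leftInvOn_of_injOn_Icc hγ hinj
  have heinj : InjOn e (γ '' Icc 0 1) := by
    rintro _ ⟨s, hs, rfl⟩ _ ⟨t, ht, rfl⟩ hst
    rw [heγ hs, heγ ht] at hst
    rw [hst]
  have hchart : ∀ z, OpenPartialHomeomorph.univBall x r z ∈ γ '' Icc 0 1 := fun z => by
    refine hball ?_
    rw [← OpenPartialHomeomorph.univBall_target x hr]
    exact (OpenPartialHomeomorph.univBall x r).map_source (by simp)
  refine not_injective_of_continuous_real hE
    (he.comp (OpenPartialHomeomorph.continuous_univBall x r)) fun y z hyz => ?_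
  exact (OpenPartialHomeomorph.univBall x r).injOn (by simp) (by simp)
    (heinj (hchart y) (hchart z) hyz)

end Arcs

section PlaneSeparation

/-- The vector from `p` to `z`, as a complex number. -/
noncomputable def displacement (p z : ℝ × ℝ) : ℂ := Complex.equivRealProdCLM.symm (z - p)

lemma continuous_displacement (p : ℝ × ℝ) : Continuous (displacement p) :=
  Complex.equivRealProdCLM.symm.continuous.comp (continuous_sub_right p)

lemma displacement_ne_zero {p z : ℝ × ℝ} (h : z ≠ p) : displacement p z ≠ 0 := by
  simpa [displacement, sub_eq_zero] using h

lemma displacement_add_displacement (p q z : ℝ × ℝ) :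
    displacement p q + displacement q z = displacement p z := by
  simp [displacement]

lemma displacement_self (p : ℝ × ℝ) : displacement p p = 0 := by
  simp [displacement]

lemma one_lt_rank_real_prod : 1 < Module.rank ℝ (ℝ × ℝ) := by
  rw [rank_prod', Module.rank_self]
  norm_num

lemma eventually_hasContinuousLogOn_displacement_div {K : Set (ℝ × ℝ)} (hK : IsClosed K)
    {p : ℝ × ℝ} (hp : p ∉ K) :
    ∀ᶠ q in 𝓝 p, HasContinuousLogOn (fun z => displacement q z / displacement p z) K := by
  obtain ⟨δ, hδ, hδK⟩ : ∃ δ > 0, ∀ z ∈ K, δ ≤ ‖displacement p z‖ := by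
    have hind : IsInducing (displacement p) :=
      Complex.equivRealProdCLM.symm.toHomeomorph.isInducing.comp
        (Homeomorph.subRight p).isInducing
    have hnhds : Kᶜ ∈ comap (displacement p) (𝓝 0) := by
      rw [← displacement_self p, ← hind.nhds_eq_comap]
      exact hK.isOpen_compl.mem_nhds hp
    obtain ⟨δ, hδ, hball⟩ := (Metric.nhds_basis_ball.comap _).mem_iff.1 hnhds
    exact ⟨δ, hδ, fun z hz => not_lt.1 fun hlt => hball (mem_ball_zero_iff.2 hlt) hz⟩
  have hnear : ∀ᶠ q in 𝓝 p, ‖displacement p q‖ < δ :=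
    (continuous_displacement p).norm.continuousAt.eventually_lt_const
      (by simpa [displacement_self] using hδ)
  filter_upwards [hnear] with q hq
  have hne : ∀ z ∈ K, displacement p z ≠ 0 := fun z hz =>
    norm_pos_iff.1 (hδ.trans_le (hδK z hz))
  refine .of_mem_slitPlane ((continuous_displacement q).continuousOn.div
    (continuous_displacement p).continuousOn hne) fun z hz => ?_
  have hquot : displacement q z / displacement p z =
      1 + -(displacement p q / displacement p z) := by
    field_simp [hne z hz]
    rw [← displacement_add_displacement p q z]
    ring
  rw [hquot]
  refine Complex.mem_slitPlane_of_norm_lt_one ?_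
  rw [norm_neg, norm_div, div_lt_one (norm_pos_iff.2 (hne z hz))]
  exact hq.trans_le (hδK z hz)

lemma hasContinuousLogOn_displacement_div {K : Set (ℝ × ℝ)} (hK : IsClosed K) {p q : ℝ × ℝ}
    (hp : p ∉ K) (hq : q ∈ connectedComponentIn Kᶜ p) :
    HasContinuousLogOn (fun z => displacement p z / displacement q z) K := by
  have hsub := connectedComponentIn_subset Kᶜ p
  refine (isPreconnected_connectedComponentIn (F := Kᶜ) (x := p)).induction₂
    (fun a b => HasContinuousLogOn (fun z => displacement a z / displacement b z) K)
    (fun a ha => ?_) (fun a b c _ hb _ hab hbc => ?_) (fun a b _ _ hab => ?_)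
    (mem_connectedComponentIn hp) hq
  · filter_upwards [mem_nhdsWithin_of_mem_nhds
      (eventually_hasContinuousLogOn_displacement_div hK (hsub ha))] with b hb
    exact hb.inv.congr fun z _ => (inv_div _ _).symm
  · exact (hab.mul hbc).congr fun z hz =>
      (div_mul_div_cancel₀ (displacement_ne_zero (ne_of_mem_of_not_mem hz (hsub hb)))).symm
  · exact hab.inv.congr fun z _ => (inv_div _ _).symm

lemma eq_zero_of_eq_displacement_zpow_off_bounded {f : ℝ × ℝ → ℂ} (hf : Continuous f)
    (hf0 : ∀ z, f z ≠ 0) {p : ℝ × ℝ} {m : ℤ} {B : Set (ℝ × ℝ)} (hB : IsBounded B)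
    (hfB : ∀ z ∉ B, f z = displacement p z ^ m) : m = 0 := by
  obtain ⟨g, hg, hgf⟩ := HasContinuousLogOn.of_simplyConnectedSpace hf hf0
  rw [continuousOn_univ] at hg
  obtain ⟨R, hR, hBR⟩ : ∃ R > 0, ∀ z ∈ B, ‖displacement p z‖ ≤ R := by
    obtain ⟨R, hR, hle⟩ := ((hB.isCompact_closure.image
      (continuous_displacement p)).isBounded).exists_pos_norm_le
    exact ⟨R, hR, fun z hz => hle _ (mem_image_of_mem _ (subset_closure hz))⟩
  let c : ℝ → ℝ × ℝ := fun t => p + Complex.equivRealProdCLM (circleMap 0 (R + 1) t)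
  have hpc : ∀ t, displacement p (c t) = circleMap 0 (R + 1) t := fun t => by
    simp only [displacement, c, add_sub_cancel_left, ContinuousLinearEquiv.symm_apply_apply]
  have hcB : ∀ t, c t ∉ B := fun t ht => by
    have := hBR _ ht
    rw [hpc, norm_circleMap_zero, abs_of_pos (by positivity)] at this
    linarith
  have hexp : ∀ t ∈ (univ : Set ℝ),
      Complex.exp (g (c t) - m * (t * Complex.I)) = ((R + 1 : ℝ) : ℂ) ^ m := fun t _ => by
    rw [Complex.exp_sub, hgf _ (mem_univ _), hfB _ (hcB t), hpc, circleMap_zero, mul_zpow,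
      Complex.exp_int_mul]
    exact mul_div_cancel_right₀ _ (zpow_ne_zero _ (Complex.exp_ne_zero _))
  have hturn := apply_eq_of_exp_eq_const isPreconnected_univ (by fun_prop) hexp
    (mem_univ 0) (mem_univ (2 * Real.pi))
  have hperiod : c (2 * Real.pi) = c 0 := by
    simp only [c, (periodic_circleMap 0 (R + 1)).eq]
  simpa [hperiod, Real.pi_ne_zero, Complex.I_ne_zero] using hturn.symm

lemma eq_zero_of_hasContinuousLogOn_zpow_mul {K : Set (ℝ × ℝ)} (hK : IsClosed K) {p : ℝ × ℝ}
    (hp : p ∉ K) (hb : IsBounded (connectedComponentIn Kᶜ p)) {h : ℝ × ℝ → ℂ}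
    (hh : ContinuousOn h (closure (connectedComponentIn Kᶜ p)))
    (hh0 : ∀ z ∈ closure (connectedComponentIn Kᶜ p), h z ≠ 0) {m : ℤ}
    (hlog : HasContinuousLogOn (fun z => displacement p z ^ m * h z) K) : m = 0 := by
  classical
  obtain ⟨g, hg, hgf⟩ := hlog
  obtain ⟨G, hG⟩ := ContinuousMap.exists_restrict_eq hK
    (⟨K.domRestrict g, continuousOn_iff_continuous_domRestrict.1 hg⟩ : C(K, ℂ))
  have hGg : ∀ z ∈ K, G z = g z := fun z hz => congrArg (fun f => f ⟨z, hz⟩) hG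
  set U := connectedComponentIn Kᶜ p
  have hUo : IsOpen U := hK.isOpen_compl.connectedComponentIn
  have hp0 : ∀ z ∉ U, displacement p z ≠ 0 := fun z hz =>
    displacement_ne_zero fun hzp => hz (hzp ▸ mem_connectedComponentIn hp)
  refine eq_zero_of_eq_displacement_zpow_off_bounded (p := p) (m := m) (B := U)
    (f := U.piecewise (fun z => Complex.exp (G z) / h z) fun z => displacement p z ^ m)
    (continuous_piecewise ?_ ?_ ?_) (fun z => ?_) hb fun z hz => piecewise_eq_of_notMem _ _ _ hz
  · intro z hz
    have hzK := frontier_connectedComponentIn_compl_subset hK p hz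
    rw [hGg z hzK, hgf z hzK, mul_div_cancel_right₀ _ (hh0 z hz.1)]
  · exact (by fun_prop : Continuous fun z => Complex.exp (G z)).continuousOn.div hh hh0
  · rw [hUo.isClosed_compl.closure_eq]
    exact (continuous_displacement p).continuousOn.zpow₀ m fun z hz => .inl (hp0 z hz)
  · by_cases hz : z ∈ U
    · rw [piecewise_eq_of_mem _ _ _ hz]
      exact div_ne_zero (Complex.exp_ne_zero _) (hh0 z (subset_closure hz))
    · rw [piecewise_eq_of_notMem _ _ _ hz]
      exact zpow_ne_zero _ (hp0 z hz)

lemma displacement_ne_zero_of_mem_closure {K : Set (ℝ × ℝ)} (hK : IsClosed K) {p q : ℝ × ℝ}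
    (hq : q ∉ K) (hpq : connectedComponentIn Kᶜ p ≠ connectedComponentIn Kᶜ q) :
    ∀ z ∈ closure (connectedComponentIn Kᶜ p), displacement q z ≠ 0 := by
  refine fun z hz => displacement_ne_zero ?_
  rintro rfl
  rw [closure_eq_self_union_frontier] at hz
  rcases hz with hz | hz
  · exact hpq (connectedComponentIn_eq hz)
  · exact hq (frontier_connectedComponentIn_compl_subset hK p hz)

/-- Eilenberg's criterion. -/
theorem connectedComponentIn_compl_eq_iff_hasContinuousLogOn {K : Set (ℝ × ℝ)} (hK : IsCompact K)
    {p q : ℝ × ℝ} (hp : p ∉ K) (hq : q ∉ K) :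
    connectedComponentIn Kᶜ p = connectedComponentIn Kᶜ q ↔
      HasContinuousLogOn (fun z => displacement p z / displacement q z) K := by
  refine ⟨fun h => hasContinuousLogOn_displacement_div hK.isClosed hp
    (h ▸ mem_connectedComponentIn hq), fun hlog => ?_⟩
  by_contra hne
  have not_isBounded_of_log : ∀ {a b : ℝ × ℝ}, a ∉ K → b ∉ K →
      connectedComponentIn Kᶜ a ≠ connectedComponentIn Kᶜ b →
      HasContinuousLogOn (fun z => displacement a z / displacement b z) K →
      ¬ IsBounded (connectedComponentIn Kᶜ a) := fun {a b} ha hb hab hlog hbdd => by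
    have hb0 := displacement_ne_zero_of_mem_closure hK.isClosed hb hab
    refine one_ne_zero (eq_zero_of_hasContinuousLogOn_zpow_mul hK.isClosed ha hbdd
      ((continuous_displacement b).continuousOn.inv₀ hb0) (fun z hz => inv_ne_zero (hb0 z hz))
      (m := 1) (hlog.congr fun z _ => ?_))
    rw [zpow_one, Pi.inv_apply, div_eq_mul_inv]
  exact hne (connectedComponentIn_compl_eq_of_not_isBounded one_lt_rank_real_prod hK.isBounded
    (not_isBounded_of_log hp hq hne hlog)
    (not_isBounded_of_log hq hp (Ne.symm hne) (hlog.inv.congr fun z _ => (inv_div _ _).symm)))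

/-- Janiszewski's theorem. -/
theorem connectedComponentIn_compl_union_eq {K L : Set (ℝ × ℝ)} (hK : IsCompact K)
    (hL : IsCompact L) (hKL : IsPreconnected (K ∩ L)) {p q : ℝ × ℝ} (hp : p ∉ K ∪ L)
    (hq : q ∉ K ∪ L) (hpqK : connectedComponentIn Kᶜ p = connectedComponentIn Kᶜ q)
    (hpqL : connectedComponentIn Lᶜ p = connectedComponentIn Lᶜ q) :
    connectedComponentIn (K ∪ L)ᶜ p = connectedComponentIn (K ∪ L)ᶜ q := by
  rw [mem_union, not_or] at hp hq
  rw [connectedComponentIn_compl_eq_iff_hasContinuousLogOn hK hp.1 hq.1] at hpqK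
  rw [connectedComponentIn_compl_eq_iff_hasContinuousLogOn hL hp.2 hq.2] at hpqL
  rw [connectedComponentIn_compl_eq_iff_hasContinuousLogOn (hK.union hL) (by simpa using hp)
    (by simpa using hq)]
  exact hpqK.union hK.isClosed hL.isClosed hKL hpqL

lemma LogAcyclic.isPreconnected_compl {K : Set (ℝ × ℝ)} (h : LogAcyclic K) (hK : IsCompact K) :
    IsPreconnected Kᶜ := by
  refine isPreconnected_of_forall_pair fun p hp q hq =>
    ⟨connectedComponentIn Kᶜ p, connectedComponentIn_subset Kᶜ p, mem_connectedComponentIn hp, ?_,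
      isPreconnected_connectedComponentIn⟩
  have hne : ∀ {a}, a ∈ Kᶜ → ∀ z ∈ K, displacement a z ≠ 0 := fun ha z hz =>
    displacement_ne_zero (ne_of_mem_of_not_mem hz ha)
  have hpq := (connectedComponentIn_compl_eq_iff_hasContinuousLogOn hK hp hq).2 <|
    h _ ((continuous_displacement p).continuousOn.div (continuous_displacement q).continuousOn
      (hne hq)) fun z hz => div_ne_zero (hne hp z hz) (hne hq z hz)
  exact hpq ▸ mem_connectedComponentIn hq

section TwoPointUnion

variable {A B : Set (ℝ × ℝ)} {a b : ℝ × ℝ}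

lemma connectedComponentIn_compl_union_eq_of_isBounded (hA : LogAcyclic A) (hB : LogAcyclic B)
    (hAc : IsCompact A) (hBc : IsCompact B) (hAB : A ∩ B = {a, b}) {p q : ℝ × ℝ}
    (hp : p ∉ A ∪ B) (hq : q ∉ A ∪ B) (hpb : IsBounded (connectedComponentIn (A ∪ B)ᶜ p))
    (hqb : IsBounded (connectedComponentIn (A ∪ B)ᶜ q)) :
    connectedComponentIn (A ∪ B)ᶜ p = connectedComponentIn (A ∪ B)ᶜ q := by
  by_contra hne
  have hclosed := (hAc.union hBc).isClosed
  obtain ⟨m, n, hmn⟩ := hA.exists_winding_numbers hB hAc.isClosed hBc.isClosed hAB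
    (continuous_displacement p).continuousOn
    (fun z hz => displacement_ne_zero (ne_of_mem_of_not_mem hz hp))
    (continuous_displacement q).continuousOn
    (fun z hz => displacement_ne_zero (ne_of_mem_of_not_mem hz hq))
  have hp0 := displacement_ne_zero_of_mem_closure hclosed hp (Ne.symm hne)
  have hq0 := displacement_ne_zero_of_mem_closure hclosed hq hne
  have left_exponent : ∀ i j : ℤ, i * m + j * n = 0 → i = 0 := fun i j hij =>
    eq_zero_of_hasContinuousLogOn_zpow_mul hclosed hp hpb
      ((continuous_displacement q).continuousOn.zpow₀ j fun z hz => .inl (hq0 z hz))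
      (fun z hz => zpow_ne_zero j (hq0 z hz)) (hmn i j hij)
  have right_exponent : ∀ i j : ℤ, i * m + j * n = 0 → j = 0 := fun i j hij =>
    eq_zero_of_hasContinuousLogOn_zpow_mul hclosed hq hqb
      ((continuous_displacement p).continuousOn.zpow₀ i fun z hz => .inl (hp0 z hz))
      (fun z hz => zpow_ne_zero i (hp0 z hz))
      ((hmn i j hij).congr fun z _ => mul_comm _ _)
  have hn : n = 0 := left_exponent n (-m) (by ring)
  exact one_ne_zero (right_exponent 0 1 (by simp [hn]))

/-- This is the half of the Jordan curve theorem saying that a closed curve has at most two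
complementary components. -/
lemma connectedComponentIn_compl_union_eq_of_ne_of_ne (hA : LogAcyclic A) (hB : LogAcyclic B)
    (hAc : IsCompact A) (hBc : IsCompact B) (hAB : A ∩ B = {a, b}) {p q r : ℝ × ℝ}
    (hp : p ∉ A ∪ B) (hq : q ∉ A ∪ B) (hr : r ∉ A ∪ B)
    (hpq : connectedComponentIn (A ∪ B)ᶜ p ≠ connectedComponentIn (A ∪ B)ᶜ q)
    (hqr : connectedComponentIn (A ∪ B)ᶜ q ≠ connectedComponentIn (A ∪ B)ᶜ r) :
    connectedComponentIn (A ∪ B)ᶜ p = connectedComponentIn (A ∪ B)ᶜ r := by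
  have eq_of_bounded {x y : ℝ × ℝ} (hx : x ∉ A ∪ B) (hy : y ∉ A ∪ B) :=
    connectedComponentIn_compl_union_eq_of_isBounded hA hB hAc hBc hAB hx hy
  have eq_of_unbounded {x y : ℝ × ℝ} := connectedComponentIn_compl_eq_of_not_isBounded
    one_lt_rank_real_prod (hAc.union hBc).isBounded (x := x) (y := y)
  by_cases hqb : IsBounded (connectedComponentIn (A ∪ B)ᶜ q)
  · exact eq_of_unbounded (fun hpb => hpq (eq_of_bounded hp hq hpb hqb))
      fun hrb => hqr (eq_of_bounded hq hr hqb hrb)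
  · exact eq_of_bounded hp hr (by_contra fun hpb => hpq (eq_of_unbounded hpb hqb))
      (by_contra fun hrb => hqr (eq_of_unbounded hqb hrb))

end TwoPointUnion

end PlaneSeparation

/-- A tree with node set `Φ` and edge set `N`, presented by its incidence relation and, for every
edge, by the partition of the nodes into the two sides of that edge. The instance of interest is
the tree formed by the faces of a plane triangulation and the edges outside a spanning tree. -/
structure DualTree (N Φ : Type*) where
  /-- The edge `e` is incident to the node `X`. -/
  Inc : N → Φ → Prop
  /-- Two nodes are related if they lie on the same side of the edge. -/
  sameSide : N → Setoid Φ
  eq_of_inc : ∀ {e X Y}, Inc e X → Inc e Y → sameSide e X Y → X = Y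
  sameSide_of_inc_ne : ∀ {e e' X Y}, e ≠ e' → Inc e' X → Inc e' Y → sameSide e X Y
  sameSide_of_not_of_not : ∀ {e X Y Z}, ¬ sameSide e X Y → ¬ sameSide e Y Z → sameSide e X Z
  forall_of_inc : ∀ {P : Φ → Prop} {X}, P X →
    (∀ e Y Z, P Y → Inc e Y → Inc e Z → P Z) → ∀ Y, P Y

namespace DualTree

variable {N Φ : Type*} (D : DualTree N Φ) {e e' : N} {X Y : Φ}

lemma finite_setOf_inc (e : N) : {X | D.Inc e X}.Finite := by
  rcases {X | D.Inc e X}.subsingleton_or_nontrivial with h | ⟨X, hX, Y, hY, hXY⟩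
  · exact h.finite
  · refine (toFinite {X, Y}).subset fun Z hZ => ?_
    by_contra! hZXY
    have hZX : ¬ D.sameSide e Z X := fun h => hZXY (.inl (D.eq_of_inc hZ hX h))
    have hXY' : ¬ D.sameSide e X Y := fun h => hXY (D.eq_of_inc hX hY h)
    exact hZXY (.inr (D.eq_of_inc hZ hY (D.sameSide_of_not_of_not hZX hXY')))

lemma finite (D : DualTree N Φ) [Finite N] : Finite Φ := by
  cases isEmpty_or_nonempty Φ
  · infer_instance
  obtain ⟨X⟩ := ‹Nonempty Φ›
  have hfin : (insert X (⋃ e, {Y | D.Inc e Y})).Finite :=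
    (finite_iUnion D.finite_setOf_inc).insert X
  exact finite_univ_iff.1 <| hfin.subset fun Y _ =>
    D.forall_of_inc (mem_insert X _) (fun e _ Z _ _ hZ => .inr (mem_iUnion.2 ⟨e, hZ⟩)) Y

lemma exists_inc_not_sameSide (hY : ¬ D.sameSide e X Y) :
    ∃ Z, D.Inc e Z ∧ ¬ D.sameSide e X Z := by
  by_contra! hside
  refine hY (D.forall_of_inc ((D.sameSide e).refl X) (fun f Z W hZ hfZ hfW => ?_) Y)
  by_cases hef : e = f
  · exact hside W (hef ▸ hfW)
  · exact (D.sameSide e).trans hZ (D.sameSide_of_inc_ne hef hfZ hfW)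

lemma sameSide_or_sameSide (hne : e ≠ e') (hX : D.Inc e X) (hX' : D.Inc e' X) (Y : Φ) :
    D.sameSide e X Y ∨ D.sameSide e' X Y := by
  have propagate : ∀ {a b f : N} {Z W : Φ}, a ≠ b → D.Inc a X → D.sameSide a X Z → D.Inc f Z →
      D.Inc f W → D.sameSide a X W ∨ D.sameSide b X W := fun {a b f Z W} hab ha hZ hfZ hfW => by
    by_cases haf : a = f
    · subst haf
      obtain rfl := D.eq_of_inc ha hfZ hZ
      exact .inr (D.sameSide_of_inc_ne hab.symm ha hfW)
    · exact .inl ((D.sameSide a).trans hZ (D.sameSide_of_inc_ne haf hfZ hfW))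
  refine D.forall_of_inc (P := fun Y => D.sameSide e X Y ∨ D.sameSide e' X Y)
    (.inl ((D.sameSide e).refl X)) ?_ Y
  rintro f Z W (hZ | hZ) hfZ hfW
  · exact propagate hne hX hZ hfZ hfW
  · exact (propagate hne.symm hX' hZ hfZ hfW).symm

lemma eq_or_exists_inc_not_sameSide (X Y : Φ) : Y = X ∨ ∃ e, D.Inc e X ∧ ¬ D.sameSide e X Y := by
  refine D.forall_of_inc (P := fun Y => Y = X ∨ ∃ e, D.Inc e X ∧ ¬ D.sameSide e X Y)
    (.inl rfl) ?_ Y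
  rintro f Z W (rfl | ⟨e, heX, heZ⟩) hfZ hfW
  · exact or_iff_not_imp_left.2 fun hWZ =>
      ⟨f, hfZ, fun h => hWZ (D.eq_of_inc hfW hfZ ((D.sameSide f).symm h))⟩
  · by_cases heW : D.sameSide e X W
    · by_cases hef : e = f
      · exact .inl (D.eq_of_inc (hef ▸ hfW) heX ((D.sameSide e).symm heW))
      · exact absurd ((D.sameSide e).trans heW (D.sameSide_of_inc_ne hef hfW hfZ)) heZ
    · exact .inr ⟨e, heX, heW⟩

open scoped Classical in
/-- The edges incident to the node `X`. -/
noncomputable def edgesAt [Fintype N] (X : Φ) : Finset N := {e | D.Inc e X}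

@[simp] lemma mem_edgesAt [Fintype N] : e ∈ D.edgesAt X ↔ D.Inc e X := by simp [edgesAt]

variable [Fintype Φ]

open scoped Classical in
/-- The nodes on the same side of the edge `e` as `X`. -/
noncomputable def side (e : N) (X : Φ) : Finset Φ := {Y | D.sameSide e X Y}

open scoped Classical in
/-- The nodes on the other side of the edge `e` than `X`. -/
noncomputable def farSide (e : N) (X : Φ) : Finset Φ := {Y | ¬ D.sameSide e X Y}

@[simp] lemma mem_side : Y ∈ D.side e X ↔ D.sameSide e X Y := by simp [side]

@[simp] lemma mem_farSide : Y ∈ D.farSide e X ↔ ¬ D.sameSide e X Y := by simp [farSide]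

lemma sum_side_add_sum_farSide (w : Φ → ℝ) (e : N) (X : Φ) :
    ∑ Y ∈ D.side e X, w Y + ∑ Y ∈ D.farSide e X, w Y = ∑ Y, w Y := by
  classical exact Finset.sum_filter_add_sum_filter_not _ _ _

lemma farSide_eq_side (h : ¬ D.sameSide e X Y) : D.farSide e X = D.side e Y := by
  ext Z
  rw [mem_farSide, mem_side]
  refine ⟨fun hXZ => D.sameSide_of_not_of_not (fun hYX => h ((D.sameSide e).symm hYX)) hXZ,
    fun hYZ hXZ => h ((D.sameSide e).trans hXZ ((D.sameSide e).symm hYZ))⟩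

variable [Fintype N]

lemma sum_eq_add_sum_farSide (w : Φ → ℝ) (X : Φ) :
    ∑ Y, w Y = w X + ∑ e ∈ D.edgesAt X, ∑ Y ∈ D.farSide e X, w Y := by
  classical
  have hdisj : (D.edgesAt X : Set N).PairwiseDisjoint fun e => D.farSide e X := by
    refine fun e he e' he' hne => Finset.disjoint_left.2 fun Y hY hY' => ?_
    rw [mem_farSide] at hY hY'
    exact (D.sameSide_or_sameSide hne (D.mem_edgesAt.1 he) (D.mem_edgesAt.1 he') Y).elim hY hY'
  have hcover : (Finset.univ : Finset Φ) =
      insert X ((D.edgesAt X).biUnion fun e => D.farSide e X) := by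
    ext Y
    simpa using D.eq_or_exists_inc_not_sameSide X Y
  rw [hcover, Finset.sum_insert, Finset.sum_biUnion hdisj]
  simp

lemma exists_le_sum_farSide {w : Φ → ℝ} {X : Φ} {d : ℕ} {t : ℝ} (hd : 0 < d) (ht : 0 < t)
    (hdeg : (D.edgesAt X).card ≤ d) (hw : d * t + w X ≤ ∑ Y, w Y) :
    ∃ e, D.Inc e X ∧ t ≤ ∑ Y ∈ D.farSide e X, w Y := by
  have hdt : d * t ≤ ∑ e ∈ D.edgesAt X, ∑ Y ∈ D.farSide e X, w Y := by
    linarith [D.sum_eq_add_sum_farSide w X]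
  have hne : (D.edgesAt X).Nonempty := by
    by_contra hempty
    rw [Finset.not_nonempty_iff_eq_empty.1 hempty, Finset.sum_empty] at hdt
    have : 0 < d * t := by positivity
    linarith
  obtain ⟨e, he, hle⟩ := Finset.exists_le_of_sum_le (f := fun _ => t) hne <| calc
    ∑ _ ∈ D.edgesAt X, t = (D.edgesAt X).card * t := by simp
    _ ≤ d * t := by gcongr
    _ ≤ _ := hdt
  exact ⟨e, D.mem_edgesAt.1 he, hle⟩

/-- Among the edges with a heavy far side, one with an inclusion-minimal far side is balanced:
otherwise the next heavy far side would be strictly smaller. -/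
theorem exists_balanced_edge [Nonempty Φ] {w : Φ → ℝ} {d : ℕ} {t : ℝ} (hd : 0 < d) (ht : 0 < t)
    (hdeg : ∀ X, (D.edgesAt X).card ≤ d) (hw : ∀ X, d * t + w X ≤ ∑ Y, w Y) :
    ∃ e X Y, D.Inc e X ∧ D.Inc e Y ∧ ¬ D.sameSide e X Y ∧
      ∑ Z ∈ D.side e X, w Z ≤ ∑ Z, w Z - t ∧ ∑ Z ∈ D.side e Y, w Z ≤ ∑ Z, w Z - t := by
  have exists_heavy (X : Φ) := D.exists_le_sum_farSide hd ht (hdeg X) (hw X)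
  obtain ⟨⟨e, X⟩, ⟨heX, hheavy⟩, hmin⟩ :=
    (toFinite {p : N × Φ | D.Inc p.1 p.2 ∧ t ≤ ∑ Y ∈ D.farSide p.1 p.2, w Y}).exists_minimalFor
      (fun p => D.farSide p.1 p.2) _
      (let ⟨e, he⟩ := exists_heavy (Classical.arbitrary Φ); ⟨(e, _), he⟩)
  obtain ⟨Y, hY⟩ : (D.farSide e X).Nonempty :=
    Finset.nonempty_of_sum_ne_zero (ht.trans_le hheavy).ne'
  obtain ⟨Z, heZ, hXZ⟩ := D.exists_inc_not_sameSide (D.mem_farSide.1 hY)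
  obtain ⟨e', he'Z, hheavy'⟩ := exists_heavy Z
  have hee' : e' = e := by
    by_contra hne
    have hfar : D.farSide e' Z ⊆ D.farSide e X := fun W hW => by
      rw [D.farSide_eq_side hXZ, mem_side]
      exact (D.sameSide_or_sameSide hne he'Z heZ W).resolve_left (D.mem_farSide.1 hW)
    have hZ : Z ∈ D.farSide e' Z := hmin (j := (e', Z)) ⟨he'Z, hheavy'⟩ hfar (D.mem_farSide.2 hXZ)
    exact D.mem_farSide.1 hZ ((D.sameSide e').refl Z)
  subst hee'
  exact ⟨e', X, Z, heX, heZ, hXZ, by linarith [D.sum_side_add_sum_farSide w e' X],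
    by linarith [D.sum_side_add_sum_farSide w e' Z]⟩

end DualTree

lemma exists_adj_forall_adj_eq_of_isAcyclic {W : Type*} {H : SimpleGraph W} [Finite H.edgeSet]
    (hH : H.IsAcyclic) (hne : H ≠ ⊥) : ∃ u v, H.Adj u v ∧ ∀ w, H.Adj v w → w = u := by
  obtain ⟨a, b, hab⟩ := SimpleGraph.ne_bot_iff_exists_adj.1 hne
  have : Nonempty W := ⟨a⟩
  obtain ⟨u, v, p, hp, hmax⟩ := SimpleGraph.Walk.exists_isPath_forall_isPath_length_le_length H
  have hnil : ¬ p.Nil := fun h => by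
    have := hmax _ _ hab.toWalk (SimpleGraph.Walk.IsPath.of_adj hab)
    simp [SimpleGraph.Walk.length_eq_zero_iff.2 h] at this
  refine ⟨p.penultimate, v, p.adj_penultimate hnil, fun w hvw => ?_⟩
  refine hH.eq_penultimate_of_adj_end hp hvw ?_
  by_contra hw
  have := hmax _ _ (p.concat hvw) (hp.concat hw hvw)
  simp at this

section Drawings

variable {G : SimpleGraph V} (emb : UPlaneEmbedding G) {E E' : Set (Sym2 V)} {e : Sym2 V}
  {u v w : V} {x : ℝ × ℝ}

lemma mem_udrawing : x ∈ udrawing emb E ↔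
    ∃ u v, s(u, v) ∈ E ∧ G.Adj u v ∧ x ∈ emb.arc u v '' Icc 0 1 := by
  simp only [udrawing, mem_iUnion, exists_prop, and_assoc]

lemma udrawing_mono (h : E ⊆ E') : udrawing emb E ⊆ udrawing emb E' := fun x hx => by
  obtain ⟨u, v, huv, hx⟩ := (mem_udrawing emb).1 hx
  exact (mem_udrawing emb).2 ⟨u, v, h huv, hx⟩

lemma udrawing_subset_ufullDrawing (E : Set (Sym2 V)) :
    udrawing emb E ⊆ ufullDrawing emb := fun x hx => by
  obtain ⟨u, v, -, huv, hx⟩ := (mem_udrawing emb).1 hx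
  exact (mem_udrawing emb).2 ⟨u, v, huv, huv, hx⟩

lemma udrawing_union (E E' : Set (Sym2 V)) :
    udrawing emb (E ∪ E') = udrawing emb E ∪ udrawing emb E' := by
  ext x
  simp only [mem_union, mem_udrawing, or_and_right, exists_or]

lemma arc_image_symm (u v : V) : emb.arc v u '' Icc 0 1 = emb.arc u v '' Icc 0 1 := by
  have hsubset (u v : V) : emb.arc v u '' Icc 0 1 ⊆ emb.arc u v '' Icc 0 1 := by
    rintro _ ⟨t, ht, rfl⟩
    exact ⟨1 - t, ⟨sub_nonneg.2 ht.2, sub_le_self 1 ht.1⟩, (emb.arc_symm u v t).symm⟩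
  exact (hsubset u v).antisymm (hsubset v u)

lemma udrawing_singleton (huv : G.Adj u v) :
    udrawing emb {s(u, v)} = emb.arc u v '' Icc 0 1 := by
  ext x
  rw [mem_udrawing]
  refine ⟨fun ⟨a, b, hab, _, hx⟩ => ?_, fun hx => ⟨u, v, rfl, huv, hx⟩⟩
  rcases Sym2.eq_iff.1 hab with ⟨rfl, rfl⟩ | ⟨rfl, rfl⟩
  · exact hx
  · rwa [arc_image_symm]

lemma logAcyclic_udrawing_singleton (huv : G.Adj u v) : LogAcyclic (udrawing emb {s(u, v)}) := by
  rw [udrawing_singleton emb huv]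
  exact .image_Icc (emb.arc_cont u v huv) (emb.arc_inj u v huv)

lemma isCompact_udrawing [Finite V] (E : Set (Sym2 V)) : IsCompact (udrawing emb E) :=
  isCompact_iUnion fun u => isCompact_iUnion fun v => isCompact_iUnion fun h =>
    isCompact_Icc.image_of_continuousOn (emb.arc_cont u v h.2)

lemma dense_compl_udrawing [Finite V] (E : Set (Sym2 V)) : Dense (udrawing emb E)ᶜ := by
  simp only [udrawing, compl_iUnion]
  have hopen (u v : V) (h : s(u, v) ∈ E ∧ G.Adj u v) : IsOpen (emb.arc u v '' Icc 0 1)ᶜ :=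
    (isCompact_Icc.image_of_continuousOn (emb.arc_cont u v h.2)).isClosed.isOpen_compl
  refine dense_iInter_of_isOpen
    (fun u => isOpen_iInter_of_finite fun v => isOpen_iInter_of_finite (hopen u v)) fun u => ?_
  refine dense_iInter_of_isOpen (fun v => isOpen_iInter_of_finite (hopen u v)) fun v => ?_
  exact dense_iInter_of_isOpen (hopen u v) fun h =>
    dense_compl_image_Icc one_lt_rank_real_prod (emb.arc_cont u v h.2) (emb.arc_inj u v h.2)

lemma pos_mem_udrawing (heE : e ∈ E) (he : e ∈ G.edgeSet) (hw : w ∈ e) :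
    emb.pos w ∈ udrawing emb E := by
  obtain ⟨v, rfl⟩ := hw
  exact (mem_udrawing emb).2 ⟨w, v, heE, he, 0, by simp, emb.arc_start w v he⟩

lemma udrawing_inter_udrawing_subset (h : Disjoint E E') :
    udrawing emb E ∩ udrawing emb E' ⊆
      emb.pos '' {w | (∃ e ∈ E, w ∈ e) ∧ ∃ e ∈ E', w ∈ e} := by
  rintro x ⟨hx, hx'⟩
  obtain ⟨u, v, huvE, huv, hxuv⟩ := (mem_udrawing emb).1 hx
  obtain ⟨a, b, habE', hab, hxab⟩ := (mem_udrawing emb).1 hx'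
  have hne : ({u, v} : Set V) ≠ {a, b} := fun heq =>
    h.ne_of_mem huvE habE' (Sym2.eq_iff.2 (pair_eq_pair_iff.1 heq))
  obtain ⟨hend, hend'⟩ := emb.arc_meet u v a b huv hab hne ⟨hxuv, hxab⟩
  rw [← image_pair] at hend hend'
  obtain ⟨w, hw, rfl⟩ := hend
  rw [emb.pos_inj.mem_set_image] at hend'
  exact ⟨w, ⟨⟨_, huvE, Sym2.mem_iff.2 hw⟩, ⟨_, habE', Sym2.mem_iff.2 hend'⟩⟩, rfl⟩

lemma arc_half_notMem_udrawing (huv : G.Adj u v) (h : s(u, v) ∉ E) :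
    emb.arc u v (1 / 2) ∉ udrawing emb E := fun hx => by
  have hhalf : (1 / 2 : ℝ) ∈ Icc 0 1 := by norm_num
  have hmem : emb.arc u v (1 / 2) ∈ udrawing emb {s(u, v)} := by
    rw [udrawing_singleton emb huv]
    exact mem_image_of_mem _ hhalf
  obtain ⟨w, ⟨⟨_, rfl, hw⟩, -⟩, heq⟩ :=
    udrawing_inter_udrawing_subset emb (disjoint_singleton_left.2 h) ⟨hmem, hx⟩
  rcases Sym2.mem_iff.1 hw with rfl | rfl
  · rw [← emb.arc_start _ _ huv] at heq
    exact absurd (emb.arc_inj _ _ huv (by norm_num) hhalf heq) (by norm_num)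
  · rw [← emb.arc_end _ _ huv] at heq
    exact absurd (emb.arc_inj _ _ huv (by norm_num) hhalf heq) (by norm_num)

lemma isPreconnected_udrawing_edges (p : G.Walk u v) :
    IsPreconnected (udrawing emb {e | e ∈ p.edges}) := by
  induction p with
  | nil => simp [udrawing, isPreconnected_empty]
  | @cons u v w huv p ih =>
    have harc : IsPreconnected (udrawing emb {s(u, v)}) := by
      rw [udrawing_singleton emb huv]
      exact isPreconnected_Icc.image _ (emb.arc_cont u v huv)
    have hedges : {e | e ∈ (p.cons huv).edges} = {s(u, v)} ∪ {e | e ∈ p.edges} := by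
      ext e
      simp
    cases p with
    | nil => simpa [ofPred_eq_eq_singleton] using harc
    | cons hvw p =>
      rw [hedges, udrawing_union]
      exact harc.union (emb.pos v) (pos_mem_udrawing emb rfl huv (Sym2.mem_mk_right u v))
        (pos_mem_udrawing emb (by simp) hvw (Sym2.mem_mk_left v _)) ih

lemma udrawing_diff_inter_udrawing_edges_union (huv : G.Adj u v) (p : G.Walk u v)
    (hp : s(u, v) ∉ p.edges) :
    udrawing emb (G.edgeSet \ {s(u, v)}) ∩ udrawing emb ({e | e ∈ p.edges} ∪ {s(u, v)}) =
      udrawing emb {e | e ∈ p.edges} := by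
  refine Subset.antisymm ?_ (subset_inter (udrawing_mono emb fun e he =>
    ⟨p.edges_subset_edgeSet he, fun hne => hp (hne ▸ he)⟩) (udrawing_mono emb subset_union_left))
  rw [udrawing_union, inter_union_distrib_left]
  refine union_subset inter_subset_right
    ((udrawing_inter_udrawing_subset emb disjoint_sdiff_left).trans ?_)
  rintro _ ⟨w, ⟨-, _, rfl, hw⟩, rfl⟩
  have hnil : ¬ p.Nil := fun hnil => huv.ne hnil.eq
  have hwp : w ∈ p.support := by
    rcases Sym2.mem_iff.1 hw with rfl | rfl
    exacts [p.start_mem_support, p.end_mem_support]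
  obtain ⟨e, he, hwe⟩ :=
    (SimpleGraph.Walk.mem_support_iff_exists_mem_edges_of_not_nil hnil).1 hwp
  exact pos_mem_udrawing emb he (p.edges_subset_edgeSet he) hwe

lemma pos_mem_udrawing_of_preconnected [Nontrivial V] {H : SimpleGraph V} (hHG : H ≤ G)
    (hH : H.Preconnected) (v : V) : emb.pos v ∈ udrawing emb H.edgeSet := by
  obtain ⟨w, hvw⟩ := hH.exists_adj_of_nontrivial v
  exact pos_mem_udrawing emb hvw (hHG hvw) (Sym2.mem_mk_left v w)

lemma logAcyclic_udrawing [Finite V] {H : SimpleGraph V} (hHG : H ≤ G) (hH : H.IsAcyclic) :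
    LogAcyclic (udrawing emb H.edgeSet) := by
  induction H using WellFoundedLT.induction with
  | ind H ih =>
  rcases eq_or_ne H ⊥ with rfl | hne
  · simpa [udrawing] using LogAcyclic.empty
  obtain ⟨u, v, huv, hv⟩ := exists_adj_forall_adj_eq_of_isAcyclic hH hne
  have hle : H.deleteEdges {s(u, v)} ≤ H := H.deleteEdges_le _
  have hlt : H.deleteEdges {s(u, v)} < H :=
    hle.lt_of_not_ge fun h => by simpa using h huv
  have hrest := ih _ hlt (hle.trans hHG) (hH.anti hle)
  have hinter : udrawing emb (H.deleteEdges {s(u, v)}).edgeSet ∩ udrawing emb {s(u, v)} ⊆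
      {emb.pos u} := by
    refine (udrawing_inter_udrawing_subset emb ?_).trans ?_
    · simp
    · rintro _ ⟨w, ⟨⟨e, he, hwe⟩, ⟨_, rfl, hw⟩⟩, rfl⟩
      rcases Sym2.mem_iff.1 hw with rfl | rfl
      · rfl
      · obtain ⟨a, rfl⟩ := hwe
        obtain ⟨hwa, hne⟩ := SimpleGraph.deleteEdges_adj.1 he
        exact (hne (by rw [hv a hwa]; exact Sym2.eq_swap)).elim
  have hedges : H.edgeSet = (H.deleteEdges {s(u, v)}).edgeSet ∪ {s(u, v)} := by
    rw [SimpleGraph.edgeSet_deleteEdges, sdiff_union_of_subset]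
    exact singleton_subset_iff.2 huv
  rw [hedges, udrawing_union]
  exact hrest.union (logAcyclic_udrawing_singleton emb (hHG huv))
    (isCompact_udrawing emb _).isClosed (isCompact_udrawing emb _).isClosed
    (subsingleton_singleton.anti hinter).isPreconnected

end Drawings

section Faces

variable {G : SimpleGraph V} {emb : UPlaneEmbedding G} {E E' : Set (Sym2 V)} {e : Sym2 V}
  {u v : V} {F F' F'' : Set (ℝ × ℝ)} {x : ℝ × ℝ}

namespace IsUFace

lemma isPreconnected (hF : IsUFace emb F) : IsPreconnected F := by
  obtain ⟨x, -, rfl⟩ := hF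
  exact isPreconnected_connectedComponentIn

lemma isOpen [Finite V] (hF : IsUFace emb F) : IsOpen F := by
  obtain ⟨x, -, rfl⟩ := hF
  exact (isCompact_udrawing emb _).isClosed.isOpen_compl.connectedComponentIn

lemma nonempty (hF : IsUFace emb F) : F.Nonempty := by
  obtain ⟨x, hx, rfl⟩ := hF
  exact ⟨x, mem_connectedComponentIn hx⟩

lemma notMem_udrawing (hF : IsUFace emb F) (hx : x ∈ F) (E : Set (Sym2 V)) :
    x ∉ udrawing emb E := by
  obtain ⟨y, -, rfl⟩ := hF
  exact fun h => connectedComponentIn_subset _ _ hx (udrawing_subset_ufullDrawing emb E h)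

lemma eq_connectedComponentIn (hF : IsUFace emb F) (hx : x ∈ F) :
    F = connectedComponentIn (ufullDrawing emb)ᶜ x := by
  obtain ⟨y, -, rfl⟩ := hF
  exact connectedComponentIn_eq hx

end IsUFace

lemma exists_isUFace_mem (hx : x ∉ ufullDrawing emb) : ∃ F, IsUFace emb F ∧ x ∈ F :=
  ⟨_, ⟨x, hx, rfl⟩, mem_connectedComponentIn hx⟩

variable (emb) in
/-- The region of the drawing of the edge set `E` containing the face `F`: the union of the
connected components of the complement of the drawing met by `F`, which is a single component when
`F` is a face. -/
def region (E : Set (Sym2 V)) (F : Set (ℝ × ℝ)) : Set (ℝ × ℝ) :=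
  ⋃ x ∈ F, connectedComponentIn (udrawing emb E)ᶜ x

namespace IsUFace

lemma region_eq_of_mem_closure (hF : IsUFace emb F) (hx : x ∈ closure F)
    (hxE : x ∉ udrawing emb E) :
    region emb E F = connectedComponentIn (udrawing emb E)ᶜ x := by
  have hcomponent : ∀ y ∈ F, connectedComponentIn (udrawing emb E)ᶜ y =
      connectedComponentIn (udrawing emb E)ᶜ x := fun y hy =>
    connectedComponentIn_eq_of_mem_closure hF.isPreconnected
      (fun z hz => hF.notMem_udrawing hz E) hy hx hxE
  exact (iUnion₂_congr hcomponent).trans (biUnion_const hF.nonempty _)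

lemma region_eq (hF : IsUFace emb F) (hx : x ∈ F) :
    region emb E F = connectedComponentIn (udrawing emb E)ᶜ x :=
  hF.region_eq_of_mem_closure (subset_closure hx) (hF.notMem_udrawing hx E)

lemma subset_region (hF : IsUFace emb F) : F ⊆ region emb E F := fun x hx => by
  rw [hF.region_eq hx]
  exact mem_connectedComponentIn (hF.notMem_udrawing hx E)

lemma region_edgeSet (hF : IsUFace emb F) : region emb G.edgeSet F = F := by
  obtain ⟨x, hx⟩ := hF.nonempty
  rw [hF.region_eq hx]
  exact (hF.eq_connectedComponentIn hx).symm

lemma region_eq_region_of_subset (hF : IsUFace emb F) (hF' : IsUFace emb F') (hE : E' ⊆ E)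
    (h : region emb E F = region emb E F') : region emb E' F = region emb E' F' := by
  obtain ⟨x, hx⟩ := hF.nonempty
  obtain ⟨y, hy⟩ := hF'.nonempty
  rw [hF.region_eq hx, hF'.region_eq hy] at h ⊢
  exact connectedComponentIn_eq_of_subset (compl_subset_compl.2 (udrawing_mono emb hE))
    (hF'.notMem_udrawing hy E) h

lemma faceInside_udrawing_iff (hF : IsUFace emb F) :
    FaceInside (udrawing emb E) F ↔ IsBounded (region emb E F) := by
  obtain ⟨x, hx⟩ := hF.nonempty
  exact ⟨fun h => hF.region_eq hx ▸ h x hx, fun h y hy => hF.region_eq hy ▸ h⟩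

lemma faceOutside_udrawing_iff (hF : IsUFace emb F) :
    FaceOutside (udrawing emb E) F ↔ ¬ IsBounded (region emb E F) := by
  obtain ⟨x, hx⟩ := hF.nonempty
  exact ⟨fun h => hF.region_eq hx ▸ h x hx, fun h y hy => hF.region_eq hy ▸ h⟩

variable [Finite V]

lemma region_eq_of_not_isBounded (hF : IsUFace emb F) (hF' : IsUFace emb F')
    (h : ¬ IsBounded (region emb E F)) (h' : ¬ IsBounded (region emb E F')) :
    region emb E F = region emb E F' := by
  obtain ⟨x, hx⟩ := hF.nonempty
  obtain ⟨y, hy⟩ := hF'.nonempty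
  rw [hF.region_eq hx] at h ⊢
  rw [hF'.region_eq hy] at h' ⊢
  exact connectedComponentIn_compl_eq_of_not_isBounded one_lt_rank_real_prod
    (isCompact_udrawing emb E).isBounded h h'

lemma region_union_eq (hF : IsUFace emb F) (hF' : IsUFace emb F')
    (hEE' : IsPreconnected (udrawing emb E ∩ udrawing emb E'))
    (hE : region emb E F = region emb E F') (hE' : region emb E' F = region emb E' F') :
    region emb (E ∪ E') F = region emb (E ∪ E') F' := by
  obtain ⟨x, hx⟩ := hF.nonempty
  obtain ⟨y, hy⟩ := hF'.nonempty
  have hxE := hF.notMem_udrawing hx (E ∪ E')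
  have hyE := hF'.notMem_udrawing hy (E ∪ E')
  rw [hF.region_eq hx, hF'.region_eq hy] at hE hE' ⊢
  rw [udrawing_union] at hxE hyE ⊢
  exact connectedComponentIn_compl_union_eq (isCompact_udrawing emb E) (isCompact_udrawing emb E')
    hEE' hxE hyE hE hE'

lemma region_union_eq_of_ne_of_ne (hF : IsUFace emb F) (hF' : IsUFace emb F')
    (hF'' : IsUFace emb F'') {a b : ℝ × ℝ} (hE : LogAcyclic (udrawing emb E))
    (hE' : LogAcyclic (udrawing emb E')) (hEE' : udrawing emb E ∩ udrawing emb E' = {a, b})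
    (h : region emb (E ∪ E') F ≠ region emb (E ∪ E') F')
    (h' : region emb (E ∪ E') F' ≠ region emb (E ∪ E') F'') :
    region emb (E ∪ E') F = region emb (E ∪ E') F'' := by
  obtain ⟨x, hx⟩ := hF.nonempty
  obtain ⟨y, hy⟩ := hF'.nonempty
  obtain ⟨z, hz⟩ := hF''.nonempty
  have hxE := hF.notMem_udrawing hx (E ∪ E')
  have hyE := hF'.notMem_udrawing hy (E ∪ E')
  have hzE := hF''.notMem_udrawing hz (E ∪ E')
  rw [hF.region_eq hx, hF'.region_eq hy] at h
  rw [hF'.region_eq hy, hF''.region_eq hz] at h'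
  rw [hF.region_eq hx, hF''.region_eq hz]
  rw [udrawing_union] at *
  exact connectedComponentIn_compl_union_eq_of_ne_of_ne hE hE' (isCompact_udrawing emb E)
    (isCompact_udrawing emb E') hEE' hxE hyE hzE h h'

end IsUFace

lemma exists_isUFace_not_isBounded_region [Finite V]
    (hE : (region emb E '' {F | IsUFace emb F}).Finite) :
    ∃ F, IsUFace emb F ∧ ¬ IsBounded (region emb E F) := by
  by_contra! hbdd
  have hunion : IsBounded (⋃₀ (region emb E '' {F | IsUFace emb F})) :=
    (isBounded_sUnion hE).2 (forall_mem_image.2 hbdd)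
  refine NormedSpace.unbounded_univ ℝ (ℝ × ℝ) ?_
  rw [← (dense_compl_udrawing emb G.edgeSet).closure_eq]
  refine (hunion.subset fun x hx => ?_).closure
  obtain ⟨F, hF, hxF⟩ := exists_isUFace_mem hx
  exact ⟨_, mem_image_of_mem _ hF, hF.subset_region hxF⟩

variable (emb) in
/-- The edge `e` joins two nodes on the boundary of `F`. In a plane triangulation this means that
`e` lies on the boundary of the face `F`. -/
def IsIncident (F : Set (ℝ × ℝ)) (e : Sym2 V) : Prop :=
  ∀ v ∈ e, OnFace emb F v

namespace IsIncident

lemma udrawing_subset_closure (htri : IsTriangulation emb) (hF : IsUFace emb F)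
    (hFe : IsIncident emb F e) : udrawing emb {e} ⊆ closure F := by
  refine Subset.trans ?_ frontier_subset_closure
  rw [(htri F hF).2.2]
  intro x hx
  obtain ⟨u, v, rfl, huv, hx⟩ := (mem_udrawing emb).1 hx
  exact (mem_udrawing emb).2 ⟨u, v, ⟨u, v, rfl, hFe u (Sym2.mem_mk_left u v),
    hFe v (Sym2.mem_mk_right u v), huv⟩, huv, hx⟩

lemma region_eq_region (htri : IsTriangulation emb) (hF : IsUFace emb F) (hF' : IsUFace emb F')
    (hFe : IsIncident emb F e) (hF'e : IsIncident emb F' e) (he : e ∈ G.edgeSet) (heE : e ∉ E) :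
    region emb E F = region emb E F' := by
  induction e with | _ u v
  have hmem : emb.arc u v (1 / 2) ∈ udrawing emb {s(u, v)} := by
    rw [udrawing_singleton emb he]
    exact mem_image_of_mem _ (by norm_num)
  have hnotMem := arc_half_notMem_udrawing emb he heE
  rw [hF.region_eq_of_mem_closure (hFe.udrawing_subset_closure htri hF hmem) hnotMem,
    hF'.region_eq_of_mem_closure (hF'e.udrawing_subset_closure htri hF' hmem) hnotMem]

lemma eq_of_region_eq [Finite V] (htri : IsTriangulation emb) (hF : IsUFace emb F)
    (hF' : IsUFace emb F') (hFe : IsIncident emb F s(u, v)) (hF'e : IsIncident emb F' s(u, v))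
    (huv : G.Adj u v) (huvE : s(u, v) ∈ E) (p : G.Walk u v) (hp : s(u, v) ∉ p.edges)
    (hpE : ∀ e ∈ p.edges, e ∈ E) (h : region emb E F = region emb E F') : F = F' := by
  have hcycle : {e | e ∈ p.edges} ∪ {s(u, v)} ⊆ E :=
    union_subset hpE (singleton_subset_iff.2 huvE)
  have hunion : G.edgeSet \ {s(u, v)} ∪ ({e | e ∈ p.edges} ∪ {s(u, v)}) = G.edgeSet := by
    refine Subset.antisymm (union_subset sdiff_subset
      (union_subset p.edges_subset_edgeSet (singleton_subset_iff.2 huv))) fun e he => ?_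
    by_cases hne : e = s(u, v)
    exacts [.inr (.inr hne), .inl ⟨he, hne⟩]
  have hregion := hF.region_union_eq hF'
    (udrawing_diff_inter_udrawing_edges_union emb huv p hp ▸ isPreconnected_udrawing_edges emb p)
    (hFe.region_eq_region htri hF hF' hF'e huv fun h => h.2 rfl)
    (hF.region_eq_region_of_subset hF' hcycle h)
  rwa [hunion, hF.region_edgeSet, hF'.region_edgeSet] at hregion

end IsIncident

lemma isIncident_of_connectedComponentIn_inter_nonempty [Finite V] (htri : IsTriangulation emb)
    (hF : IsUFace emb F) (hx : x ∈ udrawing emb {e}) (hxe : x ∉ udrawing emb (G.edgeSet \ {e}))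
    (h : (connectedComponentIn (udrawing emb (G.edgeSet \ {e}))ᶜ x ∩ F).Nonempty) :
    IsIncident emb F e := by
  obtain ⟨y, hy, hyF⟩ := exists_mem_inter_frontier isPreconnected_connectedComponentIn h
    ⟨x, mem_connectedComponentIn hxe, fun hxF => hF.notMem_udrawing hxF _ hx⟩
  rw [(htri F hF).2.2] at hyF
  obtain ⟨a, b, ⟨a', b', hab', ha', hb', -⟩, hab, hyab⟩ := (mem_udrawing emb).1 hyF
  have heq : s(a', b') = e := by
    by_contra hne
    refine connectedComponentIn_subset _ _ hy ((mem_udrawing emb).2 ⟨a, b, ⟨hab, ?_⟩, hab, hyab⟩)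
    exact fun h => hne (hab' ▸ h)
  rintro w hw
  rw [← heq] at hw
  rcases Sym2.mem_iff.1 hw with rfl | rfl
  exacts [ha', hb']

end Faces

section SpanningTree

variable {G T : SimpleGraph V} {emb : UPlaneEmbedding G} {e : Sym2 V} {x : ℝ × ℝ}

lemma exists_mem_nhds_forall_eq_or_isIncident [Finite V] (htri : IsTriangulation emb) (hT : T ≤ G)
    (hTconn : T.Preconnected) (hx : x ∉ udrawing emb T.edgeSet) :
    ∃ U ∈ 𝓝 x, ∀ F F', IsUFace emb F → IsUFace emb F' → (U ∩ F).Nonempty → (U ∩ F').Nonempty →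
      F = F' ∨ ∃ e ∈ G.edgeSet \ T.edgeSet, IsIncident emb F e ∧ IsIncident emb F' e := by
  by_cases hxG : x ∈ ufullDrawing emb
  · obtain ⟨u, v, -, huv, hxuv⟩ := (mem_udrawing emb).1 hxG
    have : Nontrivial V := ⟨u, v, huv.ne⟩
    have hxe : x ∈ udrawing emb {s(u, v)} := udrawing_singleton emb huv ▸ hxuv
    have huvT : s(u, v) ∉ T.edgeSet := fun h =>
      hx (udrawing_mono emb (singleton_subset_iff.2 h) hxe)
    have hxrest : x ∉ udrawing emb (G.edgeSet \ {s(u, v)}) := fun h => by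
      obtain ⟨w, -, rfl⟩ := udrawing_inter_udrawing_subset emb disjoint_sdiff_left ⟨h, hxe⟩
      exact hx (pos_mem_udrawing_of_preconnected emb hT hTconn w)
    have hopen := (isCompact_udrawing emb (G.edgeSet \ {s(u, v)})).isClosed.isOpen_compl
    exact ⟨_, hopen.connectedComponentIn.mem_nhds (mem_connectedComponentIn hxrest),
      fun F F' hF hF' hUF hUF' => .inr ⟨s(u, v), ⟨huv, huvT⟩,
        isIncident_of_connectedComponentIn_inter_nonempty htri hF hxe hxrest hUF,
        isIncident_of_connectedComponentIn_inter_nonempty htri hF' hxe hxrest hUF'⟩⟩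
  · obtain ⟨F₀, hF₀, hxF₀⟩ := exists_isUFace_mem hxG
    have eq_of_meets {F : Set (ℝ × ℝ)} (hF : IsUFace emb F) : (F₀ ∩ F).Nonempty → F = F₀ :=
      fun ⟨y, hy₀, hy⟩ =>
        (hF.eq_connectedComponentIn hy).trans (hF₀.eq_connectedComponentIn hy₀).symm
    exact ⟨F₀, hF₀.isOpen.mem_nhds hxF₀, fun F F' hF hF' hUF hUF' =>
      .inl ((eq_of_meets hF hUF).trans (eq_of_meets hF' hUF').symm)⟩

lemma forall_isUFace_of_isIncident [Finite V] (htri : IsTriangulation emb) (hT : T ≤ G)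
    (hTree : T.IsTree) {P : Set (ℝ × ℝ) → Prop} {F₀ : Set (ℝ × ℝ)} (hF₀ : IsUFace emb F₀)
    (hP₀ : P F₀)
    (hP : ∀ e ∈ G.edgeSet \ T.edgeSet, ∀ F F', IsUFace emb F → IsUFace emb F' → P F →
      IsIncident emb F e → IsIncident emb F' e → P F') :
    ∀ F, IsUFace emb F → P F := by
  by_contra! ⟨F₁, hF₁, hP₁⟩
  have exists_meets_of_mem_closure (Q : Set (ℝ × ℝ) → Prop) {x : ℝ × ℝ} :
      x ∈ closure (⋃₀ {F | IsUFace emb F ∧ Q F}) →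
        ∀ U ∈ 𝓝 x, ∃ F, IsUFace emb F ∧ Q F ∧ (U ∩ F).Nonempty := fun hx U hU => by
    obtain ⟨y, hyU, F, ⟨hF, hQF⟩, hyF⟩ := mem_closure_iff_nhds.1 hx U hU
    exact ⟨F, hF, hQF, y, hyU, hyF⟩
  have hcover : closure (⋃₀ {F | IsUFace emb F ∧ P F}) ∪
      closure (⋃₀ {F | IsUFace emb F ∧ ¬ P F}) = univ := by
    rw [← closure_union, ← dense_iff_closure_eq]
    refine (dense_compl_udrawing emb G.edgeSet).mono fun x hx => ?_
    obtain ⟨F, hF, hxF⟩ := exists_isUFace_mem hx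
    exact (em (P F)).imp (fun h => ⟨F, ⟨hF, h⟩, hxF⟩) fun h => ⟨F, ⟨hF, h⟩, hxF⟩
  have meets (Q : Set (ℝ × ℝ) → Prop) {F : Set (ℝ × ℝ)} (hF : IsUFace emb F) (hQ : Q F) :
      ((udrawing emb T.edgeSet)ᶜ ∩ closure (⋃₀ {F | IsUFace emb F ∧ Q F})).Nonempty := by
    obtain ⟨x, hx⟩ := hF.nonempty
    exact ⟨x, hF.notMem_udrawing hx _, subset_closure ⟨F, ⟨hF, hQ⟩, hx⟩⟩
  have htreeCompl := (logAcyclic_udrawing emb hT hTree.isAcyclic).isPreconnected_compl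
    (isCompact_udrawing emb _)
  obtain ⟨x, hxT, hx, hx'⟩ := isPreconnected_closed_iff.1 htreeCompl _ _ isClosed_closure
    isClosed_closure (hcover ▸ subset_univ _) (meets P hF₀ hP₀) (meets (¬ P ·) hF₁ hP₁)
  obtain ⟨U, hU, hincident⟩ :=
    exists_mem_nhds_forall_eq_or_isIncident htri hT hTree.connected.preconnected hxT
  obtain ⟨F, hF, hPF, hUF⟩ := exists_meets_of_mem_closure P hx U hU
  obtain ⟨F', hF', hPF', hUF'⟩ := exists_meets_of_mem_closure (¬ P ·) hx' U hU
  rcases hincident F F' hF hF' hUF hUF' with rfl | ⟨e, he, hFe, hF'e⟩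
  exacts [hPF' hPF, hPF' (hP e he F F' hF hF' hPF hFe hF'e)]

lemma region_union_singleton_eq_of_ne_of_ne [Finite V] (hT : T ≤ G) (hTree : T.IsTree)
    (he : e ∈ G.edgeSet \ T.edgeSet) {F F' F'' : Set (ℝ × ℝ)} (hF : IsUFace emb F)
    (hF' : IsUFace emb F') (hF'' : IsUFace emb F'')
    (h : region emb (T.edgeSet ∪ {e}) F ≠ region emb (T.edgeSet ∪ {e}) F')
    (h' : region emb (T.edgeSet ∪ {e}) F' ≠ region emb (T.edgeSet ∪ {e}) F'') :
    region emb (T.edgeSet ∪ {e}) F = region emb (T.edgeSet ∪ {e}) F'' := by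
  induction e with | _ u v
  obtain ⟨huv, huvT⟩ := he
  have : Nontrivial V := ⟨u, v, SimpleGraph.Adj.ne huv⟩
  have hinter : udrawing emb T.edgeSet ∩ udrawing emb {s(u, v)} = {emb.pos u, emb.pos v} := by
    refine Subset.antisymm ?_ ?_
    · refine (udrawing_inter_udrawing_subset emb (disjoint_singleton_right.2 huvT)).trans ?_
      rintro _ ⟨w, ⟨-, _, rfl, hw⟩, rfl⟩
      rcases Sym2.mem_iff.1 hw with rfl | rfl
      exacts [.inl rfl, .inr rfl]
    · rintro _ (rfl | rfl)
      · exact ⟨pos_mem_udrawing_of_preconnected emb hT hTree.connected.preconnected u,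
          pos_mem_udrawing emb rfl huv (Sym2.mem_mk_left u v)⟩
      · exact ⟨pos_mem_udrawing_of_preconnected emb hT hTree.connected.preconnected v,
          pos_mem_udrawing emb rfl huv (Sym2.mem_mk_right u v)⟩
  exact hF.region_union_eq_of_ne_of_ne hF' hF'' (logAcyclic_udrawing emb hT hTree.isAcyclic)
    (logAcyclic_udrawing_singleton emb huv) hinter h h'

lemma exists_walk_edges_subset_of_isCycle {W : Type*} {H : SimpleGraph W} {a u v : W}
    {c : H.Walk a a} (hc : c.IsCycle) (huv : s(u, v) ∈ c.edges) :
    ∃ p : H.Walk u v, s(u, v) ∉ p.edges ∧ ∀ e ∈ p.edges, e ∈ c.edges := by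
  let C : SimpleGraph W := SimpleGraph.fromEdgeSet {e | e ∈ c.edges}
  have hCedges : C.edgeSet ⊆ {e | e ∈ c.edges} := by
    simp [C, SimpleGraph.edgeSet_fromEdgeSet]
  have hcC : ∀ e ∈ c.edges, e ∈ C.edgeSet := fun e he => by
    simpa [C, SimpleGraph.edgeSet_fromEdgeSet, he] using
      H.not_isDiag_of_mem_edgeSet (c.edges_subset_edgeSet he)
  obtain ⟨-, hreach⟩ := SimpleGraph.adj_and_reachable_delete_edges_iff_exists_cycle.2
    ⟨a, c.transfer C hcC, hc.transfer hcC, by rwa [SimpleGraph.Walk.edges_transfer]⟩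
  obtain ⟨p, hp⟩ := SimpleGraph.reachable_deleteEdges_iff_exists_walk.1 hreach
  have hpc : ∀ e ∈ p.edges, e ∈ c.edges := fun e he => hCedges (p.edges_subset_edgeSet he)
  exact ⟨p.transfer H fun e he => c.edges_subset_edgeSet (hpc e he),
    by rwa [SimpleGraph.Walk.edges_transfer], by simpa using hpc⟩

variable (emb) in
/-- The faces of an embedded graph, as a type. -/
abbrev Face : Type := {F : Set (ℝ × ℝ) // IsUFace emb F}

/-- The dual tree of a spanning tree `T` of a plane triangulation: its nodes are the faces, its
edges are the edges outside `T`, and the two sides of an edge `e` are the two regions into which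
the drawing of `T ∪ {e}` divides the plane. -/
def dualTree [Finite V] (htri : IsTriangulation emb) (hT : T ≤ G) (hTree : T.IsTree) :
    DualTree ↥(G.edgeSet \ T.edgeSet) (Face emb) where
  Inc e F := IsIncident emb F e
  sameSide e := Setoid.ker fun F => region emb (T.edgeSet ∪ {e.1}) F
  eq_of_inc {e F F'} hFe hF'e h := by
    obtain ⟨e, he⟩ := e
    induction e with | _ u v
    obtain ⟨p⟩ := hTree.connected.preconnected u v
    refine Subtype.ext (hFe.eq_of_region_eq htri F.2 F'.2 hF'e he.1 (.inr rfl) (p.mapLe hT) ?_ ?_ h)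
    · rw [SimpleGraph.Walk.edges_mapLe_eq_edges]
      exact fun h => he.2 (p.edges_subset_edgeSet h)
    · rw [SimpleGraph.Walk.edges_mapLe_eq_edges]
      exact fun f hf => .inl (p.edges_subset_edgeSet hf)
  sameSide_of_inc_ne {e e' F F'} hne hF hF' := by
    refine hF.region_eq_region htri F.2 F'.2 hF' e'.2.1 ?_
    rintro (h | h)
    exacts [e'.2.2 h, hne (Subtype.ext h).symm]
  sameSide_of_not_of_not {e F F' F''} :=
    region_union_singleton_eq_of_ne_of_ne hT hTree e.2 F.2 F'.2 F''.2
  forall_of_inc {P F₀} hP₀ hP F := by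
    have := forall_isUFace_of_isIncident htri hT hTree (P := fun F => ∃ hF, P ⟨F, hF⟩) F₀.2
      ⟨F₀.2, hP₀⟩ (fun e he F F' hF hF' ⟨_, hPF⟩ hFe hF'e =>
        ⟨hF', hP ⟨e, he⟩ ⟨F, hF⟩ ⟨F', hF'⟩ hPF hFe hF'e⟩) F F.2
    exact this.2

lemma card_edgesAt_dualTree_le [Finite V] [Fintype ↥(G.edgeSet \ T.edgeSet)]
    (htri : IsTriangulation emb) (hT : T ≤ G) (hTree : T.IsTree) (F : Face emb) :
    ((dualTree htri hT hTree).edgesAt F).card ≤ 3 := by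
  classical
  have := Fintype.ofFinite V
  let corners : Finset V := {v | OnFace emb F v}
  have hcorners : corners.card = 3 := by
    rw [← (htri F F.2).1, ncard_eq_toFinset_card']
    simp [corners]
  calc ((dualTree htri hT hTree).edgesAt F).card
      ≤ (corners.offDiag.image Sym2.mk.uncurry).card := by
        refine Finset.card_le_card_of_injOn Subtype.val ?_ Subtype.val_injective.injOn
        rintro ⟨e, he⟩ hFe
        have hFe : IsIncident emb F e := (dualTree htri hT hTree).mem_edgesAt.1 hFe
        induction e with | _ u v
        exact Finset.mem_coe.2 (Finset.mem_image.2 ⟨(u, v), by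
          simpa [corners] using ⟨hFe u (Sym2.mem_mk_left u v), hFe v (Sym2.mem_mk_right u v),
            SimpleGraph.Adj.ne he.1⟩, rfl⟩)
    _ = 3 := by rw [Sym2.card_image_offDiag, hcorners]; rfl

end SpanningTree

section FundamentalCycle

variable {G T : SimpleGraph V} {emb : UPlaneEmbedding G} {u v a b : V}

lemma sum_face_eq_finsum [Fintype (Face emb)] (μ : Set (ℝ × ℝ) → ℝ) :
    ∑ F : Face emb, μ F = ∑ᶠ F ∈ {F | IsUFace emb F}, μ F := by
  rw [← finsum_eq_sum_of_fintype]
  exact finsum_set_coe_eq_finsum_mem {F | IsUFace emb F}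

lemma finsum_face_le_sum [Finite (Face emb)] {μ : Set (ℝ × ℝ) → ℝ}
    (hμ : ∀ F, IsUFace emb F → 0 ≤ μ F) {Q : Set (ℝ × ℝ) → Prop} {s : Finset (Face emb)}
    (hs : ∀ F : Face emb, Q F → F ∈ s) :
    ∑ᶠ F ∈ {F | IsUFace emb F ∧ Q F}, μ F ≤ ∑ F ∈ s, μ F := by
  classical
  have := Fintype.ofFinite (Face emb)
  have himage : {F | IsUFace emb F ∧ Q F} = Subtype.val '' {F : Face emb | Q F} := by
    ext F
    simp [and_comm]
  rw [himage, finsum_mem_image Subtype.val_injective.injOn, finsum_mem_eq_toFinset_sum]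
  exact Finset.sum_le_sum_of_subset_of_nonneg (fun F hF => hs F (by simpa using hF))
    fun F _ _ => hμ F F.2

lemma edges_subset_edgeSet_union_singleton
    (p : (T ⊔ SimpleGraph.fromEdgeSet {s(u, v)}).Walk a b) :
    {e | e ∈ p.edges} ⊆ T.edgeSet ∪ {s(u, v)} := fun e he => by
  have := p.edges_subset_edgeSet he
  rw [SimpleGraph.edgeSet_sup, SimpleGraph.edgeSet_fromEdgeSet] at this
  exact this.imp_right And.left

variable [Finite V] {c : (T ⊔ SimpleGraph.fromEdgeSet {s(u, v)}).Walk a a}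

lemma eq_of_region_fundamentalCycle_eq (htri : IsTriangulation emb) (hT : T ≤ G)
    (huv : G.Adj u v) (hc : c.IsCycle) (huvc : s(u, v) ∈ c.edges) {A B : Face emb}
    (hA : IsIncident emb A s(u, v)) (hB : IsIncident emb B s(u, v))
    (h : region emb {e | e ∈ c.edges} A = region emb {e | e ∈ c.edges} B) : A = B := by
  have hG : T ⊔ SimpleGraph.fromEdgeSet {s(u, v)} ≤ G :=
    sup_le hT (G.fromEdgeSet_le.2 fun e he => he.1 ▸ huv)
  obtain ⟨p, hp, hpc⟩ := exists_walk_edges_subset_of_isCycle hc huvc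
  rw [← SimpleGraph.Walk.edges_mapLe_eq_edges hG] at hp hpc
  exact Subtype.ext (hA.eq_of_region_eq htri A.2 B.2 hB huv huvc (p.mapLe hG) hp hpc h)

lemma sameSide_of_region_ne (htri : IsTriangulation emb) (hT : T ≤ G) (hTree : T.IsTree)
    {e : ↥(G.edgeSet \ T.edgeSet)} {E : Set (Sym2 V)} (hE : E ⊆ T.edgeSet ∪ {e.1})
    {A B Y : Face emb} (hAB : ¬ (dualTree htri hT hTree).sameSide e A B)
    (hBY : region emb E B ≠ region emb E Y) : (dualTree htri hT hTree).sameSide e A Y :=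
  (dualTree htri hT hTree).sameSide_of_not_of_not hAB fun h =>
    hBY (B.2.region_eq_region_of_subset Y.2 hE h)

lemma isBounded_region_fundamentalCycle_iff (htri : IsTriangulation emb) (hT : T ≤ G)
    (hTree : T.IsTree) (he : s(u, v) ∈ G.edgeSet \ T.edgeSet) (hc : c.IsCycle)
    (huvc : s(u, v) ∈ c.edges) {A B : Face emb} (hA : IsIncident emb A s(u, v))
    (hB : IsIncident emb B s(u, v)) (hAB : ¬ (dualTree htri hT hTree).sameSide ⟨_, he⟩ A B) :
    IsBounded (region emb {e | e ∈ c.edges} A) ↔ ¬ IsBounded (region emb {e | e ∈ c.edges} B) := by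
  have hcT := edges_subset_edgeSet_union_singleton c
  refine ⟨fun hbddA hbddB => ?_, fun hB' => by_contra fun hA' => ?_⟩
  · have : Finite {F | IsUFace emb F} := (dualTree htri hT hTree).finite
    have hfaces : {F | IsUFace emb F}.Finite := toFinite _
    obtain ⟨F, hF, hunbdd⟩ :=
      exists_isUFace_not_isBounded_region (hfaces.image (region emb {e | e ∈ c.edges}))
    by_cases hFA : (dualTree htri hT hTree).sameSide ⟨_, he⟩ ⟨F, hF⟩ A
    · exact hunbdd (hF.region_eq_region_of_subset A.2 hcT hFA ▸ hbddA)
    · have hFB := (dualTree htri hT hTree).sameSide_of_not_of_not hFA hAB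
      exact hunbdd (hF.region_eq_region_of_subset B.2 hcT hFB ▸ hbddB)
  · obtain rfl := eq_of_region_fundamentalCycle_eq htri hT he.1 hc huvc hA hB
      (A.2.region_eq_of_not_isBounded B.2 hA' hB')
    exact hAB (((dualTree htri hT hTree).sameSide _).refl A)

lemma finsum_face_fundamentalCycle_le [Fintype (Face emb)] {μ : Set (ℝ × ℝ) → ℝ} {M : ℝ}
    (htri : IsTriangulation emb) (hμ : ∀ F, IsUFace emb F → 0 ≤ μ F) (hT : T ≤ G)
    (hTree : T.IsTree) (he : s(u, v) ∈ G.edgeSet \ T.edgeSet) (hc : c.IsCycle)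
    (huvc : s(u, v) ∈ c.edges) {A B : Face emb} (hA : IsIncident emb A s(u, v))
    (hB : IsIncident emb B s(u, v)) (hAB : ¬ (dualTree htri hT hTree).sameSide ⟨_, he⟩ A B)
    (hMA : ∑ F ∈ (dualTree htri hT hTree).side ⟨_, he⟩ A, μ F ≤ M)
    (hMB : ∑ F ∈ (dualTree htri hT hTree).side ⟨_, he⟩ B, μ F ≤ M) :
    ∑ᶠ F ∈ {F | IsUFace emb F ∧ FaceInside (udrawing emb {e | e ∈ c.edges}) F}, μ F ≤ M ∧
      ∑ᶠ F ∈ {F | IsUFace emb F ∧ FaceOutside (udrawing emb {e | e ∈ c.edges}) F}, μ F ≤ M := by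
  have hBA : ¬ (dualTree htri hT hTree).sameSide ⟨_, he⟩ B A := fun h =>
    hAB (((dualTree htri hT hTree).sameSide _).symm h)
  have hiff := isBounded_region_fundamentalCycle_iff htri hT hTree he hc huvc hA hB hAB
  wlog hbddA : IsBounded (region emb {e | e ∈ c.edges} A) generalizing A B
  · exact this hB hA hBA hMB hMA hAB (iff_not_comm.1 hiff) (not_not.1 (mt hiff.2 hbddA))
  have hcT := edges_subset_edgeSet_union_singleton c
  refine ⟨(finsum_face_le_sum hμ fun F hF => ?_).trans hMA,
    (finsum_face_le_sum hμ fun F hF => ?_).trans hMB⟩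
  · rw [F.2.faceInside_udrawing_iff] at hF
    exact (DualTree.mem_side _).2 (sameSide_of_region_ne htri hT hTree hcT hAB fun h =>
      hiff.1 hbddA (h ▸ hF))
  · rw [F.2.faceOutside_udrawing_iff] at hF
    exact (DualTree.mem_side _).2 (sameSide_of_region_ne htri hT hTree hcT hBA fun h =>
      hF (h ▸ hbddA))

end FundamentalCycle

/-- Let `G△` be an `n`-node simple undirected plane
triangulation whose faces carry nonnegative weights `μ` summing to `1` such
that the weight of each face is at most `1/4`, and let `T` be a spanning tree
of `G△`.  Then there exists an edge `e = uv` of `G△` not in `T` such that the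
total weight of the faces of `G△` inside the unique simple cycle of
`T ∪ {e}` is at most `3/4` and the total weight of the faces of `G△` outside
this cycle is at most `3/4`.  (The fundamental cycle is quantified over all
simple cycles of `T ∪ {e}` through `e`, which are unique up to rotation and
reversal.) -/
theorem stmt12 {V : Type} [Fintype V] (G : SimpleGraph V)
    (emb : UPlaneEmbedding G) (htri : IsTriangulation emb)
    (μ : Set (ℝ × ℝ) → ℝ)
    (hnonneg : ∀ F, IsUFace emb F → 0 ≤ μ F)
    (hsum : ∑ᶠ F ∈ {F | IsUFace emb F}, μ F = 1)
    (hquarter : ∀ F, IsUFace emb F → μ F ≤ 1 / 4)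
    (T : SimpleGraph V) (hT : T ≤ G) (hTree : T.IsTree) :
    ∃ u v : V, G.Adj u v ∧ ¬ T.Adj u v ∧
      ∀ (a : V) (c : (T ⊔ SimpleGraph.fromEdgeSet {s(u, v)}).Walk a a),
        c.IsCycle → s(u, v) ∈ c.edges →
        (∑ᶠ F ∈ {F | IsUFace emb F ∧
            FaceInside (udrawing emb {e | e ∈ c.edges}) F}, μ F) ≤ 3 / 4 ∧
        (∑ᶠ F ∈ {F | IsUFace emb F ∧
            FaceOutside (udrawing emb {e | e ∈ c.edges}) F}, μ F) ≤ 3 / 4 := by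
  classical
  have : Finite (Face emb) := (dualTree htri hT hTree).finite
  have := Fintype.ofFinite (Face emb)
  have hsum' : ∑ F : Face emb, μ F = 1 := (sum_face_eq_finsum μ).trans hsum
  have : Nonempty (Face emb) := by
    obtain ⟨x, hx⟩ := (dense_compl_udrawing emb G.edgeSet).nonempty
    exact ⟨_, x, hx, rfl⟩
  have hquarter' (F : Face emb) : (3 : ℕ) * (1 / 4 : ℝ) + μ F ≤ ∑ F : Face emb, μ F := by
    rw [hsum']
    norm_num
    linarith [hquarter F F.2]
  obtain ⟨⟨e, he⟩, A, B, hA, hB, hAB, hsumA, hsumB⟩ :=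
    (dualTree htri hT hTree).exists_balanced_edge (by norm_num) (by norm_num)
      (card_edgesAt_dualTree_le htri hT hTree) hquarter'
  rw [hsum', show (1 : ℝ) - 1 / 4 = 3 / 4 by norm_num] at hsumA hsumB
  induction e with | _ u v
  exact ⟨u, v, he.1, he.2, fun a c hc huvc =>
    finsum_face_fundamentalCycle_le htri hnonneg hT hTree he hc huvc hA hB hAB hsumA hsumB⟩
end
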